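/- Let H be a complex Hilbert space, J a signature operator on H, L a densely defined positive self-adjoint operator in H, and B := JL, and assume B is similar to a self-adjoint operator in H. Fix 0 < τ < ∞ and let f : [0, τ] → H be Hölder continuous, i.e. there exist K > 0 and k ∈ (0, 1] with ‖f(x) − f(y)‖ ≤ K |x − y|^k for all x, y ∈ [0, τ]. Then for every φ₊ ∈ H₊ and φ₋ ∈ H₋ there exists a unique function ψ : [0, τ] → H which is continuous on [0, τ], continuously differentiable on (0, τ), satisfies ψ(x) ∈ dom B and ψ′(x) = −Bψ(x) + f(x) for all x ∈ (0, τ), and satisfies P₊ψ(0) = φ₊ and P₋ψ(τ) = φ₋. -/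

import Mathlib

open scoped ComplexOrder InnerProductSpace

noncomputable section

variable {H : Type*} [NormedAddCommGroup H] [InnerProductSpace ℂ H] [CompleteSpace H]

/-- `J` is a signature operator: `J = J* = J⁻¹`. -/
def IsSignatureOperator (J : H →L[ℂ] H) : Prop :=
  IsSelfAdjoint J ∧ J.comp J = ContinuousLinearMap.id ℂ H

/-- The orthogonal projection onto `H₊ = ker (J - I)`, which equals `(I + J)/2`
for a signature operator `J`. -/
def Pplus (J : H →L[ℂ] H) : H →L[ℂ] H := (2⁻¹ : ℂ) • (ContinuousLinearMap.id ℂ H + J)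

/-- The orthogonal projection onto `H₋ = ker (J + I)`, which equals `(I - J)/2`
for a signature operator `J`. -/
def Pminus (J : H →L[ℂ] H) : H →L[ℂ] H := (2⁻¹ : ℂ) • (ContinuousLinearMap.id ℂ H - J)

/-- The composition `J ∘ L` of a bounded operator `J` with an unbounded operator `L`,
as an unbounded operator with the same domain as `L`. -/
def pmapComp (J : H →L[ℂ] H) (L : H →ₗ.[ℂ] H) : H →ₗ.[ℂ] H :=
  { domain := L.domain
    toFun := (J : H →ₗ[ℂ] H).comp L.toFun }

/-- `L` is a positive operator: `⟨L h, h⟩ > 0` for every nonzero `h ∈ dom L`. -/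
def IsPositivePMap (L : H →ₗ.[ℂ] H) : Prop :=
  ∀ h : L.domain, (h : H) ≠ 0 → 0 < ⟪L h, (h : H)⟫_ℂ

/-- `B` is similar to a self-adjoint operator: there is a bounded operator `S` with bounded
inverse mapping `dom B` onto the domain of a self-adjoint operator `A` such that
`A (S h) = S (B h)` for all `h ∈ dom B`. -/
def SimilarToSelfAdjoint (B : H →ₗ.[ℂ] H) : Prop :=
  ∃ (S : H ≃L[ℂ] H) (A : H →ₗ.[ℂ] H), IsSelfAdjoint A ∧
    (A.domain : Set H) = (fun h => S h) '' (B.domain : Set H) ∧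
    ∀ (h : B.domain) (hSh : S (h : H) ∈ A.domain), A ⟨S (h : H), hSh⟩ = S (B h)

/-- `ψ` solves `ψ' = -B ψ + f` on the set `s` with a continuous derivative:
on `s`, `ψ` takes values in `dom B`, is differentiable with derivative `ψ'`,
`ψ'` is continuous on `s`, and `ψ' x = -B (ψ x) + f x`. -/
def IsStrongSolutionOn (B : H →ₗ.[ℂ] H) (f : ℝ → H) (ψ : ℝ → H) (s : Set ℝ) : Prop :=
  ∃ ψ' : ℝ → H, ContinuousOn ψ' s ∧
    ∀ x ∈ s, HasDerivAt ψ (ψ' x) x ∧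
      ∃ hx : ψ x ∈ B.domain, ψ' x = -(B ⟨ψ x, hx⟩) + f x

/-!
Conjugation by `S` replaces `B` by a self-adjoint operator `A`, for which the functions
`E(t) = e^{-tA} (1 + e^{-τA})⁻¹`, `0 ≤ t ≤ τ`, are bounded although `A` is unbounded in both
directions. They solve the homogeneous equation on `(0, τ)` and satisfy `E(0) + E(τ) = 1`. The
convolution over `[0, τ]` of `E` with the `τ`-antiperiodic extension of `S f` is a particular
solution `p`: Hölder continuity tames the singularity `‖A E(r)‖ ∼ 1/r`, which puts `p(x)` in the
domain of `A`, and after the injective operator `e^{-A²}` is applied the kernel `E(x - y)` factors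
into a function of `x` times a function of `y`, so that `p` can be differentiated by the product
rule.

For solutions `S⁻¹ (E(x) w + p(x))` the boundary conditions become an equation for `w` with the
operator `1 + J S⁻¹ (E(0) - E(τ)) S`, where `E(0) - E(τ) = tanh (τA/2)`. Positivity of
`⟪J B h, h⟫ = ⟪L h, h⟫` passes from `A` to `tanh (τA/2)`, which has the same sign, so this operator
is coercive, hence invertible. For the difference `ψ` of two solutions `⟪J ψ, ψ⟫` has derivative
`-2 ⟪L ψ, ψ⟫`, is nonpositive at `0` and nonnegative at `τ`; hence it vanishes, and so does `ψ`.
-/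

open Filter Topology Set

section Graph

variable {𝕜 E : Type*} [RCLike 𝕜] [NormedAddCommGroup E] [InnerProductSpace 𝕜 E]

theorem snd_eq_of_mem_graph {A : E →ₗ.[𝕜] E} {x y z : E} (hxy : (x, y) ∈ A.graph)
    (hxz : (x, z) ∈ A.graph) : y = z :=
  LinearPMap.mem_graph_snd_inj' A hxy hxz rfl

/-- `M` intertwines the unbounded operators `A` and `B`, that is, `M A ⊆ B M`; for `B = A` this says
that `M` commutes with `A`. -/
def Intertwines (M : E →L[𝕜] E) (A B : E →ₗ.[𝕜] E) : Prop :=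
  ∀ a b, (a, b) ∈ A.graph → (M a, M b) ∈ B.graph

variable [CompleteSpace E]

theorem mem_graph_iff_forall_inner {A : E →ₗ.[𝕜] E} (hA : IsSelfAdjoint A) {x y : E} :
    (x, y) ∈ A.graph ↔ ∀ a b, (a, b) ∈ A.graph → inner 𝕜 b x = inner 𝕜 a y := by
  conv_lhs => rw [← LinearPMap.isSelfAdjoint_def.1 hA,
    LinearPMap.adjoint_graph_eq_graph_adjoint hA.dense_domain]
  simp [Submodule.mem_adjoint_iff, sub_eq_zero]

theorem inner_comm_of_mem_graph {A : E →ₗ.[𝕜] E} (hA : IsSelfAdjoint A) {a b x y : E}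
    (hab : (a, b) ∈ A.graph) (hxy : (x, y) ∈ A.graph) : inner 𝕜 b x = inner 𝕜 a y :=
  (mem_graph_iff_forall_inner hA).1 hxy a b hab

theorem denseRange_of_isSelfAdjoint_of_injective {T : E →L[𝕜] E} (hT : IsSelfAdjoint T)
    (hinj : Function.Injective T) : DenseRange T := by
  have hclosure : T.range.topologicalClosure = ⊤ := by
    rw [Submodule.topologicalClosure_eq_top_iff,
      ContinuousLinearMap.IsStarNormal.orthogonal_range hT.isStarNormal, LinearMap.ker_eq_bot]
    exact hinj
  exact Submodule.dense_iff_topologicalClosure_eq_top.2 hclosure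

end Graph

section Resolvent

variable {𝕜 E : Type*} [RCLike 𝕜] [NormedAddCommGroup E] [InnerProductSpace 𝕜 E]

theorem eq_of_mul_right_eq_of_denseRange {X Y N : E →L[𝕜] E} (hN : DenseRange N)
    (h : X * N = Y * N) : X = Y :=
  DFunLike.coe_injective <| hN.equalizer X.continuous Y.continuous <|
    funext fun v => DFunLike.congr_fun h v

/-- The pair `R = (1 + A²)⁻¹`, `T = A (1 + A²)⁻¹` attached to an unbounded operator `A`. -/
structure IsResolventPair (A : E →ₗ.[𝕜] E) (R T : E →L[𝕜] E) : Prop where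
  mem_graph : ∀ y, (R y, T y) ∈ A.graph
  mem_graph_sub : ∀ y, (T y, y - R y) ∈ A.graph

theorem IsResolventPair.injective_left {A : E →ₗ.[𝕜] E} {R T : E →L[𝕜] E}
    (h : IsResolventPair A R T) : Function.Injective R := by
  rw [injective_iff_map_eq_zero]
  intro y hRy
  have hTy : T y = 0 := snd_eq_of_mem_graph (hRy ▸ h.mem_graph y) A.graph.zero_mem
  have hy := h.mem_graph_sub y
  rw [hRy, hTy, sub_zero] at hy
  exact snd_eq_of_mem_graph hy A.graph.zero_mem

variable [CompleteSpace E] {A : E →ₗ.[𝕜] E}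

theorem exists_isResolventPair (hA : IsSelfAdjoint A) :
    ∃ R T : E →L[𝕜] E, IsResolventPair A R T := by
  let e := WithLp.prodContinuousLinearEquiv 2 𝕜 E E
  let G : Submodule 𝕜 (WithLp 2 (E × E)) := A.graph.comap (e : WithLp 2 (E × E) →ₗ[𝕜] E × E)
  have hG : IsClosed (G : Set (WithLp 2 (E × E))) :=
    IsClosed.preimage e.continuous (show IsClosed (A.graph : Set (E × E)) from hA.isClosed)
  have : CompleteSpace G := hG.completeSpace_coe
  -- `(R y, T y)` is the orthogonal projection of `(y, 0)` onto the graph of `A`.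
  let P : E →L[𝕜] E × E :=
    e.toContinuousLinearMap ∘L G.starProjection ∘L e.symm.toContinuousLinearMap ∘L
      ContinuousLinearMap.inl 𝕜 E E
  refine ⟨ContinuousLinearMap.fst 𝕜 E E ∘L P, ContinuousLinearMap.snd 𝕜 E E ∘L P,
    fun y => G.starProjection_apply_mem (e.symm (y, 0)),
    fun y => (mem_graph_iff_forall_inner hA).2 fun a b hab => ?_⟩
  have hab' : e.symm (a, b) ∈ G := by simpa [G] using hab
  have horth := G.sub_starProjection_mem_orthogonal (e.symm (y, 0)) _ hab'
  rw [WithLp.prod_inner_apply] at horth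
  have hsum : inner 𝕜 a (y - (P y).1) + inner 𝕜 b (0 - (P y).2) = 0 := horth
  rw [zero_sub, inner_neg_right, ← sub_eq_add_neg, sub_eq_zero] at hsum
  exact hsum.symm

namespace IsResolventPair

variable {R T : E →L[𝕜] E}

theorem eq_of_mem_graph (h : IsResolventPair A R T) (hA : IsSelfAdjoint A) {x y z : E}
    (hxy : (x, y) ∈ A.graph) (hyz : (y, z - x) ∈ A.graph) : x = R z := by
  have hfst := A.graph.sub_mem hxy (h.mem_graph z)
  have hsnd := A.graph.sub_mem hyz (h.mem_graph_sub z)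
  simp only [Prod.mk_sub_mk, sub_sub_sub_cancel_left] at hfst hsnd
  have hinner := inner_comm_of_mem_graph hA hfst hsnd
  rw [← neg_sub x, inner_neg_right, inner_self_eq_norm_sq_to_K, inner_self_eq_norm_sq_to_K,
    ← RCLike.ofReal_pow, ← RCLike.ofReal_pow, ← RCLike.ofReal_neg, RCLike.ofReal_inj] at hinner
  have hnorm : ‖x - R z‖ ^ 2 = 0 := by nlinarith [sq_nonneg ‖x - R z‖, sq_nonneg ‖y - T z‖]
  exact sub_eq_zero.1 (norm_eq_zero.1 (pow_eq_zero_iff two_ne_zero |>.1 hnorm))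

theorem inner_left (h : IsResolventPair A R T) (hA : IsSelfAdjoint A) (y z : E) :
    inner 𝕜 (R y) z = inner 𝕜 (R y) (R z) + inner 𝕜 (T y) (T z) := by
  rw [inner_comm_of_mem_graph hA (h.mem_graph y) (h.mem_graph_sub z), inner_sub_right]
  ring

theorem isPositive (h : IsResolventPair A R T) (hA : IsSelfAdjoint A) : R.IsPositive := by
  rw [ContinuousLinearMap.isPositive_def']
  refine ⟨ContinuousLinearMap.isSelfAdjoint_iff_isSymmetric.2 fun y z => ?_, fun y => ?_⟩
  · simp only [ContinuousLinearMap.coe_coe]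
    rw [h.inner_left hA, ← inner_conj_symm y (R z), h.inner_left hA z y]
    simp
  · rw [ContinuousLinearMap.reApplyInnerSelf_apply, h.inner_left hA, map_add]
    exact add_nonneg inner_self_nonneg inner_self_nonneg

theorem isSelfAdjoint_left (h : IsResolventPair A R T) (hA : IsSelfAdjoint A) :
    IsSelfAdjoint R :=
  (h.isPositive hA).isSelfAdjoint

theorem isSelfAdjoint_right (h : IsResolventPair A R T) (hA : IsSelfAdjoint A) :
    IsSelfAdjoint T := by
  refine ContinuousLinearMap.isSelfAdjoint_iff_isSymmetric.2 fun y z => ?_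
  have hTR := inner_comm_of_mem_graph hA (h.mem_graph y) (h.mem_graph z)
  have hTT := inner_comm_of_mem_graph hA (h.mem_graph_sub y) (h.mem_graph_sub z)
  rw [inner_sub_left, inner_sub_right, hTR, sub_left_inj] at hTT
  exact hTT.symm

theorem commute_left (h : IsResolventPair A R T) (hA : IsSelfAdjoint A) {M : E →L[𝕜] E}
    (hM : Intertwines M A A) : Commute M R :=
  ContinuousLinearMap.ext fun y =>
    h.eq_of_mem_graph hA (hM _ _ (h.mem_graph y)) (by simpa using hM _ _ (h.mem_graph_sub y))

theorem commute_right (h : IsResolventPair A R T) (hA : IsSelfAdjoint A) {M : E →L[𝕜] E}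
    (hM : Intertwines M A A) : Commute M T :=
  ContinuousLinearMap.ext fun y => snd_eq_of_mem_graph (hM _ _ (h.mem_graph y)) <|
    DFunLike.congr_fun (h.commute_left hA hM).eq y ▸ h.mem_graph (M y)

theorem intertwines_left (h : IsResolventPair A R T) (hA : IsSelfAdjoint A) :
    Intertwines R A A := by
  intro a b hab
  have hRb : R b = T a := ext_inner_right 𝕜 fun z => by
    calc inner 𝕜 (R b) z = inner 𝕜 b (R z) := (h.isSelfAdjoint_left hA).isSymmetric b z
      _ = inner 𝕜 a (T z) := inner_comm_of_mem_graph hA hab (h.mem_graph z)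
      _ = inner 𝕜 (T a) z := ((h.isSelfAdjoint_right hA).isSymmetric a z).symm
  exact hRb ▸ h.mem_graph a

theorem commute (h : IsResolventPair A R T) (hA : IsSelfAdjoint A) : Commute R T :=
  h.commute_right hA (h.intertwines_left hA)

theorem right_mul_self (h : IsResolventPair A R T) (hA : IsSelfAdjoint A) :
    T * T = R - R * R :=
  ContinuousLinearMap.ext fun y => snd_eq_of_mem_graph
    (DFunLike.congr_fun (h.commute hA).eq y ▸ h.mem_graph (T y)) (h.mem_graph_sub (R y))

end IsResolventPair

end Resolvent

section BoundedTransform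

/-- The bounded transform `D = A (1 + A²)^{-1/2}`, together with `N = (1 + A²)^{-1/2}`. -/
structure IsBoundedTransform (A : H →ₗ.[ℂ] H) (D N : H →L[ℂ] H) : Prop where
  isSelfAdjoint : IsSelfAdjoint D
  nonneg : 0 ≤ N
  mul_self_add_mul_self : D * D + N * N = 1
  commute : Commute D N
  mem_graph : ∀ y, (N y, D y) ∈ A.graph
  commute_of_intertwines : ∀ M : H →L[ℂ] H, Intertwines M A A → Commute M D

variable {A : H →ₗ.[ℂ] H} {R T D : H →L[ℂ] H}

theorem commute_sqrt_of_commute {M : H →L[ℂ] H} (hM : Commute M R) : Commute M (CFC.sqrt R) := by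
  rw [CFC.sqrt_eq_cfc]
  exact (hM.symm.cfc_nnreal _).symm

theorem injective_sqrt_of_injective (hR : 0 ≤ R) (hinj : Function.Injective R) :
    Function.Injective ⇑(CFC.sqrt R) := by
  have hcomp : ⇑(CFC.sqrt R) ∘ ⇑(CFC.sqrt R) = ⇑R :=
    congrArg DFunLike.coe (CFC.sqrt_mul_sqrt_self R)
  exact Function.Injective.of_comp (hcomp ▸ hinj)

theorem denseRange_sqrt_of_injective (hR : 0 ≤ R) (hinj : Function.Injective R) :
    DenseRange ⇑(CFC.sqrt R) :=
  denseRange_of_isSelfAdjoint_of_injective (.of_nonneg (CFC.sqrt_nonneg R))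
    (injective_sqrt_of_injective hR hinj)

theorem norm_sqrt_apply_sq (hR : 0 ≤ R) (y : H) :
    ((‖CFC.sqrt R y‖ ^ 2 : ℝ) : ℂ) = ⟪R y, y⟫_ℂ := by
  have hsymm := (IsSelfAdjoint.of_nonneg (CFC.sqrt_nonneg R)).isSymmetric (CFC.sqrt R y) y
  have hmul : CFC.sqrt R (CFC.sqrt R y) = R y :=
    DFunLike.congr_fun (CFC.sqrt_mul_sqrt_self R hR) y
  simp only [ContinuousLinearMap.coe_coe, hmul, inner_self_eq_norm_sq_to_K] at hsymm
  rw [hsymm]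
  push_cast
  rfl

namespace IsResolventPair

theorem nonneg_left (h : IsResolventPair A R T) (hA : IsSelfAdjoint A) : 0 ≤ R :=
  ContinuousLinearMap.nonneg_iff_isPositive R |>.2 (h.isPositive hA)

theorem norm_right_apply_le (h : IsResolventPair A R T) (hA : IsSelfAdjoint A) (y : H) :
    ‖T y‖ ≤ ‖CFC.sqrt R y‖ := by
  have hsq := norm_sqrt_apply_sq (h.nonneg_left hA) y
  rw [h.inner_left hA, inner_self_eq_norm_sq_to_K, inner_self_eq_norm_sq_to_K] at hsq
  have hsq' : ‖CFC.sqrt R y‖ ^ 2 = ‖R y‖ ^ 2 + ‖T y‖ ^ 2 := Complex.ofReal_injective <| by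
    rw [hsq]
    push_cast
    rfl
  exact le_of_sq_le_sq (by nlinarith [sq_nonneg ‖R y‖]) (norm_nonneg _)

theorem exists_mul_sqrt_eq (h : IsResolventPair A R T) (hA : IsSelfAdjoint A) :
    ∃ D : H →L[ℂ] H, D * CFC.sqrt R = T :=
  ⟨(T : H →ₗ[ℂ] H).extendOfNorm (CFC.sqrt R).toLinearMap, ContinuousLinearMap.ext fun y =>
    LinearMap.extendOfNorm_eq (denseRange_sqrt_of_injective (h.nonneg_left hA) h.injective_left)
      ⟨1, fun z => (h.norm_right_apply_le hA z).trans_eq (one_mul _).symm⟩ y⟩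

theorem sqrt_mem_graph (h : IsResolventPair A R T) (hA : IsSelfAdjoint A)
    (hD : D * CFC.sqrt R = T) (y : H) : (CFC.sqrt R y, D y) ∈ A.graph := by
  have hclosed : IsClosed (A.graph : Set (H × H)) := hA.isClosed
  refine (denseRange_sqrt_of_injective (h.nonneg_left hA) h.injective_left).induction_on y
    (hclosed.preimage (by fun_prop)) fun z => ?_
  have hR := h.nonneg_left hA
  have hN : CFC.sqrt R (CFC.sqrt R z) = R z := DFunLike.congr_fun (CFC.sqrt_mul_sqrt_self R hR) z
  have hDz : D (CFC.sqrt R z) = T z := DFunLike.congr_fun hD z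
  rw [hN, hDz]
  exact h.mem_graph z

theorem isBoundedTransform (h : IsResolventPair A R T) (hA : IsSelfAdjoint A)
    (hD : D * CFC.sqrt R = T) : IsBoundedTransform A D (CFC.sqrt R) := by
  have hR := h.nonneg_left hA
  have hN : IsSelfAdjoint (CFC.sqrt R) := .of_nonneg (CFC.sqrt_nonneg R)
  have hdense := denseRange_sqrt_of_injective hR h.injective_left
  have hNT : Commute T (CFC.sqrt R) := commute_sqrt_of_commute (h.commute hA).symm
  have hcomm : Commute D (CFC.sqrt R) := by
    refine eq_of_mul_right_eq_of_denseRange hdense ?_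
    rw [hD, mul_assoc, hD, hNT.eq]
  have hDsa : IsSelfAdjoint D := by
    refine eq_of_mul_right_eq_of_denseRange hdense ?_
    calc star D * CFC.sqrt R = star (CFC.sqrt R * D) := by rw [star_mul, hN.star_eq]
      _ = D * CFC.sqrt R := by rw [← hcomm.eq, hD, (h.isSelfAdjoint_right hA).star_eq]
  refine ⟨hDsa, CFC.sqrt_nonneg R, ?_, hcomm, h.sqrt_mem_graph hA hD, fun M hM => ?_⟩
  · refine eq_of_mul_right_eq_of_denseRange (denseRange_of_isSelfAdjoint_of_injective
      (h.isSelfAdjoint_left hA) h.injective_left) ?_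
    have hDDR : D * D * R = R - R * R := by
      calc D * D * R = D * D * (CFC.sqrt R * CFC.sqrt R) := by rw [CFC.sqrt_mul_sqrt_self R]
        _ = R - R * R := by rw [hcomm.mul_mul_mul_comm, hD, h.right_mul_self hA]
    rw [CFC.sqrt_mul_sqrt_self R, add_mul, hDDR, one_mul, sub_add_cancel]
  · refine eq_of_mul_right_eq_of_denseRange hdense ?_
    rw [mul_assoc, hD, (h.commute_right hA hM).eq, mul_assoc,
      (commute_sqrt_of_commute (h.commute_left hA hM)).eq, ← mul_assoc, hD]

end IsResolventPair

theorem exists_isBoundedTransform (hA : IsSelfAdjoint A) :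
    ∃ D N : H →L[ℂ] H, IsBoundedTransform A D N := by
  obtain ⟨R, T, h⟩ := exists_isResolventPair hA
  obtain ⟨D, hD⟩ := h.exists_mul_sqrt_eq hA
  exact ⟨D, CFC.sqrt R, h.isBoundedTransform hA hD⟩

end BoundedTransform

section ExtendedLine

/-- Continuous functions on `ℝ` with finite limits at `±∞`, that is, restrictions of continuous
functions on the extended real line. -/
structure ContinuousAtEnds (g : ℝ → ℝ) : Prop where
  continuous : Continuous g
  tendsto_atBot : ∃ a, Tendsto g atBot (𝓝 a)
  tendsto_atTop : ∃ b, Tendsto g atTop (𝓝 b)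

namespace ContinuousAtEnds

variable {f g : ℝ → ℝ}

theorem const (c : ℝ) : ContinuousAtEnds fun _ => c :=
  ⟨continuous_const, ⟨c, tendsto_const_nhds⟩, ⟨c, tendsto_const_nhds⟩⟩

theorem add (hf : ContinuousAtEnds f) (hg : ContinuousAtEnds g) :
    ContinuousAtEnds fun x => f x + g x :=
  let ⟨_, hfBot⟩ := hf.tendsto_atBot; let ⟨_, hfTop⟩ := hf.tendsto_atTop
  let ⟨_, hgBot⟩ := hg.tendsto_atBot; let ⟨_, hgTop⟩ := hg.tendsto_atTop
  ⟨hf.continuous.add hg.continuous, ⟨_, hfBot.add hgBot⟩, ⟨_, hfTop.add hgTop⟩⟩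

theorem mul (hf : ContinuousAtEnds f) (hg : ContinuousAtEnds g) :
    ContinuousAtEnds fun x => f x * g x :=
  let ⟨_, hfBot⟩ := hf.tendsto_atBot; let ⟨_, hfTop⟩ := hf.tendsto_atTop
  let ⟨_, hgBot⟩ := hg.tendsto_atBot; let ⟨_, hgTop⟩ := hg.tendsto_atTop
  ⟨hf.continuous.mul hg.continuous, ⟨_, hfBot.mul hgBot⟩, ⟨_, hfTop.mul hgTop⟩⟩

theorem const_mul (c : ℝ) (hg : ContinuousAtEnds g) : ContinuousAtEnds fun x => c * g x :=
  (const c).mul hg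

theorem sub (hf : ContinuousAtEnds f) (hg : ContinuousAtEnds g) :
    ContinuousAtEnds fun x => f x - g x := by
  simpa [sub_eq_add_neg] using hf.add (hg.const_mul (-1))

theorem of_abs_mul_le (hg : Continuous g) {C : ℝ} (hC : ∀ x, |x * g x| ≤ C) :
    ContinuousAtEnds g := by
  have tendsto_zero : ∀ l : Filter ℝ, Tendsto (fun x : ℝ => |x|) l atTop →
      Tendsto g l (𝓝 0) := by
    intro l hl
    refine squeeze_zero_norm' ?_ (hl.const_div_atTop C)
    filter_upwards [hl.eventually_gt_atTop 0] with x hx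
    rw [Real.norm_eq_abs, le_div_iff₀ hx, mul_comm, ← abs_mul]
    exact hC x
  exact ⟨hg, ⟨0, tendsto_zero _ tendsto_abs_atBot_atTop⟩,
    ⟨0, tendsto_zero _ tendsto_abs_atTop_atTop⟩⟩

theorem inv_one_add_sq : ContinuousAtEnds fun x => (1 + x ^ 2)⁻¹ := by
  have hpos : ∀ x : ℝ, 0 < 1 + x ^ 2 := fun x => by positivity
  refine of_abs_mul_le (C := 1) (.inv₀ (by fun_prop) fun x => (hpos x).ne') fun x => ?_
  rw [← div_eq_mul_inv, abs_div, abs_of_pos (hpos x), div_le_one (hpos x), abs_le]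
  constructor <;> nlinarith [sq_nonneg (x + 1), sq_nonneg (x - 1)]

theorem mul_inv_one_add_sq : ContinuousAtEnds fun x => x * (1 + x ^ 2)⁻¹ := by
  refine of_abs_mul_le (C := 1) (continuous_id.mul inv_one_add_sq.continuous) fun x => ?_
  have hpos : 0 < 1 + x ^ 2 := by positivity
  rw [← mul_assoc, ← div_eq_mul_inv, abs_div, abs_of_pos hpos, abs_mul_self, div_le_one hpos]
  nlinarith

end ContinuousAtEnds

/-- The piecewise linear cutoff supported in `[-δ⁻¹, δ⁻¹]` with value `1` at `0`. -/
def linearCutoff (δ x : ℝ) : ℝ := max 0 (1 - δ * |x|)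

theorem ContinuousAtEnds.linearCutoff_mul {δ : ℝ} (hδ : 0 < δ) {g : ℝ → ℝ}
    (hg : Continuous g) : ContinuousAtEnds fun x => linearCutoff δ x * g x := by
  have eq_zero : ∀ x, δ⁻¹ ≤ |x| → 0 = linearCutoff δ x * g x := fun x hx => by
    rw [inv_le_iff_one_le_mul₀ hδ] at hx
    rw [linearCutoff, max_eq_left (by linarith), zero_mul]
  refine ⟨by unfold linearCutoff; fun_prop, ⟨0, ?_⟩, ⟨0, ?_⟩⟩
  · exact tendsto_const_nhds.congr' <|
      (tendsto_abs_atBot_atTop.eventually_ge_atTop δ⁻¹).mono eq_zero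
  · exact tendsto_const_nhds.congr' <|
      (tendsto_abs_atTop_atTop.eventually_ge_atTop δ⁻¹).mono eq_zero

theorem abs_inv_one_add_sq_sub_linearCutoff_mul_le {δ : ℝ} (hδ : 0 ≤ δ) (x : ℝ) :
    |(1 + x ^ 2)⁻¹ - linearCutoff δ x * (1 + x ^ 2)⁻¹| ≤ δ := by
  have hle : linearCutoff δ x ≤ 1 := max_le zero_le_one (by nlinarith [abs_nonneg x])
  have hge : 1 - δ * |x| ≤ linearCutoff δ x := le_max_right _ _
  rw [← one_sub_mul, abs_of_nonneg (mul_nonneg (sub_nonneg.2 hle) (by positivity)),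
    ← div_eq_mul_inv, div_le_iff₀ (by positivity)]
  calc 1 - linearCutoff δ x ≤ δ * |x| := by linarith
    _ ≤ δ * (1 + x ^ 2) := by
      gcongr
      nlinarith [sq_nonneg (|x| - 1), sq_abs x]

/-- The inverse of the map `x ↦ x / √(1 + x²)` from `ℝ` onto `(-1, 1)`. -/
def lineOfUnit (d : ℝ) : ℝ := d / √(1 - d ^ 2)

/-- The function on `[-1, 1]` corresponding to a function on the extended real line. -/
def unitExtend (g : ℝ → ℝ) : ℝ → ℝ := extendFrom (Ioo (-1) 1) fun d => g (lineOfUnit d)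

theorem sqrt_one_sub_sq_pos {d : ℝ} (hd : d ∈ Ioo (-1 : ℝ) 1) : 0 < √(1 - d ^ 2) :=
  Real.sqrt_pos.2 (by nlinarith [hd.1, hd.2])

theorem sqrt_mul_lineOfUnit {d : ℝ} (hd : d ∈ Ioo (-1 : ℝ) 1) :
    √(1 - d ^ 2) * lineOfUnit d = d :=
  mul_div_cancel₀ d (sqrt_one_sub_sq_pos hd).ne'

theorem continuousOn_lineOfUnit : ContinuousOn lineOfUnit (Ioo (-1) 1) :=
  continuousOn_id.div (by fun_prop) fun _ hd => (sqrt_one_sub_sq_pos hd).ne'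

theorem tendsto_lineOfUnit_one : Tendsto lineOfUnit (𝓝[<] 1) atTop := by
  have hsqrt : Tendsto (fun d : ℝ => √(1 - d ^ 2)) (𝓝[<] 1) (𝓝[>] 0) := by
    refine tendsto_nhdsWithin_iff.2 ⟨?_, ?_⟩
    · exact tendsto_nhdsWithin_of_tendsto_nhds
        ((by fun_prop : Continuous fun d : ℝ => √(1 - d ^ 2)).tendsto' 1 0 (by simp))
    · filter_upwards [Ioo_mem_nhdsLT (show (-1 : ℝ) < 1 by norm_num)] with d hd
      exact sqrt_one_sub_sq_pos hd
  exact Tendsto.pos_mul_atTop one_pos (tendsto_nhdsWithin_of_tendsto_nhds tendsto_id)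
    hsqrt.inv_tendsto_nhdsGT_zero

theorem tendsto_lineOfUnit_neg_one : Tendsto lineOfUnit (𝓝[>] (-1)) atBot := by
  have hneg : Tendsto (fun d : ℝ => -d) (𝓝[>] (-1)) (𝓝[<] 1) := by
    simpa using tendsto_neg_nhdsGT (a := (-1 : ℝ))
  refine (tendsto_neg_atTop_atBot.comp (tendsto_lineOfUnit_one.comp hneg)).congr fun d => ?_
  simp [lineOfUnit, neg_div]

variable {g : ℝ → ℝ}

theorem unitExtend_of_mem_Ioo (hg : Continuous g) {d : ℝ} (hd : d ∈ Ioo (-1 : ℝ) 1) :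
    unitExtend g d = g (lineOfUnit d) :=
  extendFrom_extends (hg.comp_continuousOn continuousOn_lineOfUnit) d hd

theorem ContinuousAtEnds.continuousOn_unitExtend (hg : ContinuousAtEnds g) :
    ContinuousOn (unitExtend g) (Icc (-1) 1) :=
  let ⟨_, hBot⟩ := hg.tendsto_atBot; let ⟨_, hTop⟩ := hg.tendsto_atTop
  continuousOn_Icc_extendFrom_Ioo (hg.continuous.comp_continuousOn continuousOn_lineOfUnit)
    (hBot.comp tendsto_lineOfUnit_neg_one) (hTop.comp tendsto_lineOfUnit_one)

theorem ContinuousAtEnds.abs_unitExtend_le (hg : ContinuousAtEnds g) {C : ℝ}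
    (hC : ∀ x, |g x| ≤ C) {d : ℝ} (hd : d ∈ Icc (-1 : ℝ) 1) : |unitExtend g d| ≤ C := by
  have hclosure : closure (Ioo (-1 : ℝ) 1) = Icc (-1) 1 := closure_Ioo (by norm_num)
  refine le_on_closure (f := fun d => |unitExtend g d|) (g := fun _ => C) (fun x hx => ?_)
    (hclosure ▸ hg.continuousOn_unitExtend.abs) continuousOn_const (hclosure ▸ hd)
  simpa only [unitExtend_of_mem_Ioo hg.continuous hx] using hC _

end ExtendedLine

section FunctionalCalculus

/-- `Φ` is a functional calculus for the unbounded operator `A` on the functions `g` satisfying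
`ContinuousAtEnds g`; the values of `Φ` at other functions are irrelevant. -/
structure IsFunctionalCalculus (A : H →ₗ.[ℂ] H) (Φ : (ℝ → ℝ) → H →L[ℂ] H) : Prop where
  protected map_const : ∀ c, Φ (fun _ => c) = c • 1
  protected map_add : ∀ {f g}, ContinuousAtEnds f → ContinuousAtEnds g →
    Φ (fun x => f x + g x) = Φ f + Φ g
  protected map_mul : ∀ {f g}, ContinuousAtEnds f → ContinuousAtEnds g →
    Φ (fun x => f x * g x) = Φ f * Φ g
  norm_le : ∀ {g} {C : ℝ}, ContinuousAtEnds g → (∀ x, |g x| ≤ C) → ‖Φ g‖ ≤ C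
  isSelfAdjoint : ∀ g, IsSelfAdjoint (Φ g)
  mem_graph : ∀ {g}, ContinuousAtEnds g → ContinuousAtEnds (fun x => x * g x) →
    ∀ v, (Φ g v, Φ (fun x => x * g x) v) ∈ A.graph
  commute : ∀ {M : H →L[ℂ] H}, Intertwines M A A → ∀ g, Commute M (Φ g)

namespace IsBoundedTransform

variable {A : H →ₗ.[ℂ] H} {D N : H →L[ℂ] H} {f g : ℝ → ℝ}

theorem norm_le_one (h : IsBoundedTransform A D N) : ‖D‖ ≤ 1 := by
  have hNN : 0 ≤ N * N := (IsSelfAdjoint.of_nonneg h.nonneg).mul_self_nonneg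
  have hDD : ‖D * D‖ ≤ 1 := by
    rw [CStarAlgebra.norm_le_one_iff_of_nonneg _ h.isSelfAdjoint.mul_self_nonneg,
      ← h.mul_self_add_mul_self]
    exact le_add_of_nonneg_right hNN
  rw [h.isSelfAdjoint.norm_mul_self] at hDD
  exact (sq_le_one_iff₀ (norm_nonneg D)).1 hDD

theorem spectrum_subset (h : IsBoundedTransform A D N) : spectrum ℝ D ⊆ Icc (-1) 1 :=
  fun _ hd => abs_le.1 <| (spectrum.norm_le_norm_mul_of_mem hd).trans <|
    mul_le_one₀ h.norm_le_one (norm_nonneg _) ContinuousLinearMap.norm_id_le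

theorem continuousOn_unitExtend (h : IsBoundedTransform A D N) (hg : ContinuousAtEnds g) :
    ContinuousOn (unitExtend g) (spectrum ℝ D) :=
  hg.continuousOn_unitExtend.mono h.spectrum_subset

theorem cfc_congr_of_eqOn_Ioo (h : IsBoundedTransform A D N) (hf : ContinuousOn f (Icc (-1) 1))
    (hg : ContinuousOn g (Icc (-1) 1)) (hfg : EqOn f g (Ioo (-1) 1)) : cfc f D = cfc g D :=
  cfc_congr <| (hfg.of_subset_closure hf hg Ioo_subset_Icc_self
    (closure_Ioo (by norm_num)).ge).mono h.spectrum_subset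

theorem cfc_unitExtend_const (h : IsBoundedTransform A D N) (c : ℝ) :
    cfc (unitExtend fun _ => c) D = c • 1 := by
  rw [← Algebra.algebraMap_eq_smul_one, ← cfc_const c D h.isSelfAdjoint]
  exact h.cfc_congr_of_eqOn_Ioo (ContinuousAtEnds.const c).continuousOn_unitExtend
    continuousOn_const fun _ hd => unitExtend_of_mem_Ioo continuous_const hd

theorem cfc_unitExtend_add (h : IsBoundedTransform A D N) (hf : ContinuousAtEnds f)
    (hg : ContinuousAtEnds g) :
    cfc (unitExtend fun x => f x + g x) D = cfc (unitExtend f) D + cfc (unitExtend g) D := by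
  rw [← cfc_add _ _ _ (h.continuousOn_unitExtend hf) (h.continuousOn_unitExtend hg)]
  refine h.cfc_congr_of_eqOn_Ioo (hf.add hg).continuousOn_unitExtend
    (hf.continuousOn_unitExtend.add hg.continuousOn_unitExtend) fun d hd => ?_
  rw [unitExtend_of_mem_Ioo (hf.add hg).continuous hd, unitExtend_of_mem_Ioo hf.continuous hd,
    unitExtend_of_mem_Ioo hg.continuous hd]

theorem cfc_unitExtend_mul (h : IsBoundedTransform A D N) (hf : ContinuousAtEnds f)
    (hg : ContinuousAtEnds g) :
    cfc (unitExtend fun x => f x * g x) D = cfc (unitExtend f) D * cfc (unitExtend g) D := by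
  rw [← cfc_mul _ _ _ (h.continuousOn_unitExtend hf) (h.continuousOn_unitExtend hg)]
  refine h.cfc_congr_of_eqOn_Ioo (hf.mul hg).continuousOn_unitExtend
    (hf.continuousOn_unitExtend.mul hg.continuousOn_unitExtend) fun d hd => ?_
  rw [unitExtend_of_mem_Ioo (hf.mul hg).continuous hd, unitExtend_of_mem_Ioo hf.continuous hd,
    unitExtend_of_mem_Ioo hg.continuous hd]

theorem eq_cfc_sqrt_one_sub_sq (h : IsBoundedTransform A D N) :
    N = cfc (fun d : ℝ => √(1 - d ^ 2)) D := by
  have hD := h.isSelfAdjoint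
  have hN : CFC.sqrt (1 - D * D) = N :=
    CFC.sqrt_unique (by rw [← h.mul_self_add_mul_self, add_sub_cancel_left]) h.nonneg
  rw [← hN]
  refine CFC.sqrt_unique ?_ (cfc_nonneg fun _ _ => Real.sqrt_nonneg _)
  rw [← cfc_mul _ _ _, ← pow_two, ← cfc_pow_id (R := ℝ) D 2, ← cfc_const_one ℝ D, ← cfc_sub _ _ _]
  refine cfc_congr fun _ hd => Real.mul_self_sqrt ?_
  nlinarith [(h.spectrum_subset hd).1, (h.spectrum_subset hd).2]

theorem mul_cfc_unitExtend_id_mul (h : IsBoundedTransform A D N) (hg : ContinuousAtEnds g)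
    (hxg : ContinuousAtEnds fun x => x * g x) :
    N * cfc (unitExtend fun x => x * g x) D = D * cfc (unitExtend g) D := by
  have hD := h.isSelfAdjoint
  suffices N * cfc (unitExtend fun x => x * g x) D =
      cfc (fun d : ℝ => d) D * cfc (unitExtend g) D by rwa [cfc_id' ℝ D] at this
  rw [h.eq_cfc_sqrt_one_sub_sq, ← cfc_mul _ _ _ (by fun_prop) (h.continuousOn_unitExtend hxg),
    ← cfc_mul _ _ _ (by fun_prop) (h.continuousOn_unitExtend hg)]
  refine h.cfc_congr_of_eqOn_Ioo (.mul (by fun_prop) hxg.continuousOn_unitExtend)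
    (.mul (by fun_prop) hg.continuousOn_unitExtend) fun d hd => ?_
  simp only [unitExtend_of_mem_Ioo hg.continuous hd, unitExtend_of_mem_Ioo hxg.continuous hd]
  rw [← mul_assoc, sqrt_mul_lineOfUnit hd]

theorem cfc_unitExtend_mem_graph (h : IsBoundedTransform A D N) (hg : ContinuousAtEnds g)
    (hxg : ContinuousAtEnds fun x => x * g x) (v : H) :
    (cfc (unitExtend g) D v, cfc (unitExtend fun x => x * g x) D v) ∈ A.graph := by
  set G := cfc (unitExtend g) D
  set W := cfc (unitExtend fun x => x * g x) D
  have hNW : N * W = D * G := h.mul_cfc_unitExtend_id_mul hg hxg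
  have hN : N * (N * G + D * W) = G :=
    calc N * (N * G + D * W) = (D * D + N * N) * G := by
          rw [mul_add, ← mul_assoc N D, ← h.commute.eq, mul_assoc D, hNW]
          noncomm_ring
      _ = G := by rw [h.mul_self_add_mul_self, one_mul]
  have hD : D * (N * G + D * W) = W :=
    calc D * (N * G + D * W) = (D * D + N * N) * W := by
          rw [mul_add, ← mul_assoc D N, h.commute.eq, mul_assoc N, ← hNW]
          noncomm_ring
      _ = W := by rw [h.mul_self_add_mul_self, one_mul]
  have hmem := h.mem_graph ((N * G + D * W) v)
  rwa [← mul_apply_eq_comp, ← mul_apply_eq_comp, hN, hD] at hmem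

theorem isFunctionalCalculus (h : IsBoundedTransform A D N) :
    IsFunctionalCalculus A fun g => cfc (unitExtend g) D where
  map_const := h.cfc_unitExtend_const
  map_add := h.cfc_unitExtend_add
  map_mul := h.cfc_unitExtend_mul
  norm_le hg hC := norm_cfc_le ((abs_nonneg _).trans (hC 0)) fun _ hd =>
    hg.abs_unitExtend_le hC (h.spectrum_subset hd)
  isSelfAdjoint _ := cfc_predicate _ _
  mem_graph := h.cfc_unitExtend_mem_graph
  commute hM _ := ((h.commute_of_intertwines _ hM).symm.cfc_real _).symm

end IsBoundedTransform

theorem exists_isFunctionalCalculus {A : H →ₗ.[ℂ] H} (hA : IsSelfAdjoint A) :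
    ∃ Φ : (ℝ → ℝ) → H →L[ℂ] H, IsFunctionalCalculus A Φ :=
  let ⟨_, _, h⟩ := exists_isBoundedTransform hA
  ⟨_, h.isFunctionalCalculus⟩

namespace IsFunctionalCalculus

variable {A : H →ₗ.[ℂ] H} {Φ : (ℝ → ℝ) → H →L[ℂ] H} {f g : ℝ → ℝ}

protected theorem map_one (hΦ : IsFunctionalCalculus A Φ) : Φ (fun _ => 1) = 1 := by
  rw [hΦ.map_const, one_smul]

theorem map_const_mul (hΦ : IsFunctionalCalculus A Φ) (c : ℝ) (hg : ContinuousAtEnds g) :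
    Φ (fun x => c * g x) = c • Φ g := by
  rw [hΦ.map_mul (.const c) hg, hΦ.map_const, smul_mul_assoc, one_mul]

protected theorem map_sub (hΦ : IsFunctionalCalculus A Φ) (hf : ContinuousAtEnds f)
    (hg : ContinuousAtEnds g) : Φ (fun x => f x - g x) = Φ f - Φ g := by
  have h := hΦ.map_add hf (hg.const_mul (-1))
  rw [hΦ.map_const_mul (-1) hg] at h
  simpa [sub_eq_add_neg] using h

theorem commute_map (hΦ : IsFunctionalCalculus A Φ) (hf : ContinuousAtEnds f)
    (hg : ContinuousAtEnds g) : Commute (Φ f) (Φ g) := by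
  rw [Commute, SemiconjBy, ← hΦ.map_mul hf hg, ← hΦ.map_mul hg hf]
  simp only [mul_comm]

theorem intertwines (hΦ : IsFunctionalCalculus A Φ) (hA : IsSelfAdjoint A)
    (hg : ContinuousAtEnds g) (hxg : ContinuousAtEnds fun x => x * g x) :
    Intertwines (Φ g) A A := by
  intro a b hab
  have heq : Φ (fun x => x * g x) a = Φ g b := ext_inner_left ℂ fun w => by
    calc ⟪w, Φ (fun x => x * g x) a⟫_ℂ = ⟪Φ (fun x => x * g x) w, a⟫_ℂ :=
          ((hΦ.isSelfAdjoint _).isSymmetric w a).symm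
      _ = ⟪Φ g w, b⟫_ℂ := inner_comm_of_mem_graph hA (hΦ.mem_graph hg hxg w) hab
      _ = ⟪w, Φ g b⟫_ℂ := (hΦ.isSelfAdjoint g).isSymmetric w b
  exact heq ▸ hΦ.mem_graph hg hxg a

theorem injective_inv_one_add_sq (hΦ : IsFunctionalCalculus A Φ) :
    Function.Injective (Φ fun x => (1 + x ^ 2)⁻¹) := by
  have hsq : (fun x : ℝ => x * (x * (1 + x ^ 2)⁻¹)) = fun x => 1 - (1 + x ^ 2)⁻¹ := by
    funext x
    field_simp
    ring
  have hends : ContinuousAtEnds fun x => x * (x * (1 + x ^ 2)⁻¹) :=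
    hsq ▸ (ContinuousAtEnds.const 1).sub .inv_one_add_sq
  rw [injective_iff_map_eq_zero]
  intro v hv
  have hAv : Φ (fun x => x * (1 + x ^ 2)⁻¹) v = 0 := snd_eq_of_mem_graph
    (hv ▸ hΦ.mem_graph .inv_one_add_sq .mul_inv_one_add_sq v) A.graph.zero_mem
  have hAAv : Φ (fun x => x * (x * (1 + x ^ 2)⁻¹)) v = 0 := snd_eq_of_mem_graph
    (hAv ▸ hΦ.mem_graph .mul_inv_one_add_sq hends v) A.graph.zero_mem
  rw [hsq, hΦ.map_sub (.const 1) .inv_one_add_sq, hΦ.map_one] at hAAv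
  simpa [hv] using hAAv

/-- Cutting off at `±δ⁻¹` makes `g` invertible at the cost of an error of norm at most `δ`. -/
theorem injective (hΦ : IsFunctionalCalculus A Φ) (hg : ContinuousAtEnds g)
    (hne : ∀ x, g x ≠ 0) : Function.Injective (Φ g) := by
  rw [injective_iff_map_eq_zero]
  intro v hv
  have norm_le : ∀ δ > 0, ‖Φ (fun x => (1 + x ^ 2)⁻¹) v‖ ≤ δ * ‖v‖ := by
    intro δ hδ
    have hr : ContinuousAtEnds fun x => linearCutoff δ x * ((1 + x ^ 2)⁻¹ * (g x)⁻¹) :=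
      .linearCutoff_mul hδ <|
        ContinuousAtEnds.inv_one_add_sq.continuous.mul (hg.continuous.inv₀ hne)
    have hrg : (fun x => linearCutoff δ x * ((1 + x ^ 2)⁻¹ * (g x)⁻¹) * g x) =
        fun x => linearCutoff δ x * (1 + x ^ 2)⁻¹ :=
      funext fun x => by rw [mul_assoc, inv_mul_cancel_right₀ (hne x)]
    have hcut := hrg ▸ hr.mul hg
    have hzero : Φ (fun x => linearCutoff δ x * (1 + x ^ 2)⁻¹) v = 0 := by
      rw [← hrg, hΦ.map_mul hr hg, mul_apply_eq_comp, hv, map_zero]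
    have hsub := ContinuousLinearMap.le_of_opNorm_le _ (hΦ.norm_le
      (ContinuousAtEnds.inv_one_add_sq.sub hcut)
      (abs_inv_one_add_sq_sub_linearCutoff_mul_le hδ.le)) v
    rwa [hΦ.map_sub .inv_one_add_sq hcut, sub_apply, hzero, sub_zero] at hsub
  have hlim : Tendsto (fun δ : ℝ => δ * ‖v‖) (𝓝[>] 0) (𝓝 0) :=
    tendsto_nhdsWithin_of_tendsto_nhds ((continuous_mul_const ‖v‖).tendsto' 0 0 (zero_mul _))
  have hnorm : ‖Φ (fun x => (1 + x ^ 2)⁻¹) v‖ ≤ 0 :=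
    ge_of_tendsto hlim (eventually_mem_nhdsWithin.mono norm_le)
  exact hΦ.injective_inv_one_add_sq (by rw [norm_le_zero_iff.1 hnorm, map_zero])

end IsFunctionalCalculus

end FunctionalCalculus

section ExponentialFamily

theorem abs_exp_neg_sub_one_le (u : ℝ) : |Real.exp (-u) - 1| ≤ |u| * (1 + Real.exp (-u)) := by
  have hneg := Real.add_one_le_exp (-u)
  have hmul : (u + 1) * Real.exp (-u) ≤ 1 :=
    calc (u + 1) * Real.exp (-u) ≤ Real.exp u * Real.exp (-u) := by
          gcongr
          exact Real.add_one_le_exp u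
      _ = 1 := by rw [← Real.exp_add, add_neg_cancel, Real.exp_zero]
  have hpos := Real.exp_pos (-u)
  rcases abs_cases u with ⟨hu, _⟩ | ⟨hu, _⟩ <;> rw [hu, abs_le] <;> constructor <;> nlinarith

theorem abs_exp_neg_sub_one_add_le (u : ℝ) :
    |Real.exp (-u) - 1 + u| ≤ u ^ 2 * (1 + Real.exp (-u)) := by
  have hmul : (u + 1) * Real.exp (-u) ≤ 1 :=
    calc (u + 1) * Real.exp (-u) ≤ Real.exp u * Real.exp (-u) := by
          gcongr
          exact Real.add_one_le_exp u
      _ = 1 := by rw [← Real.exp_add, add_neg_cancel, Real.exp_zero]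
  calc |Real.exp (-u) - 1 + u| = Real.exp (-u) - 1 + u :=
        abs_of_nonneg (by linarith [Real.add_one_le_exp (-u)])
    _ ≤ -u * (Real.exp (-u) - 1) := by linarith
    _ ≤ |u| * |Real.exp (-u) - 1| := by
      rw [← abs_neg u, ← abs_mul]
      exact le_abs_self _
    _ ≤ |u| * (|u| * (1 + Real.exp (-u))) := by
      gcongr
      exact abs_exp_neg_sub_one_le u
    _ = u ^ 2 * (1 + Real.exp (-u)) := by rw [← mul_assoc, abs_mul_abs_self, sq]

theorem mul_exp_neg_le {m : ℝ} (hm : 0 < m) (y : ℝ) : y * Real.exp (-(m * y)) ≤ m⁻¹ := by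
  rw [Real.exp_neg, ← div_eq_mul_inv, div_le_iff₀ (Real.exp_pos _), inv_mul_eq_div, le_div_iff₀ hm]
  linarith [Real.add_one_le_exp (m * y)]

/-- The function `x ↦ e^{-tx} w(x)`, whose value at an operator `A` is `e^{-tA} w(A)`. -/
def expWeight (w : ℝ → ℝ) (t x : ℝ) : ℝ := Real.exp (-(t * x)) * w x

variable {w w' : ℝ → ℝ} {s t : ℝ}

theorem expWeight_eq_mul (w : ℝ → ℝ) (s t x : ℝ) :
    expWeight w s x = expWeight w t x * Real.exp (-((s - t) * x)) := by
  rw [expWeight, expWeight, mul_right_comm, ← Real.exp_add]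
  congr 2
  ring

theorem expWeight_nonneg (hw0 : ∀ x, 0 ≤ w x) (t x : ℝ) : 0 ≤ expWeight w t x :=
  mul_nonneg (Real.exp_nonneg _) (hw0 x)

theorem continuous_expWeight (hw : Continuous w) (t : ℝ) : Continuous (expWeight w t) := by
  unfold expWeight
  fun_prop

theorem abs_mul_expWeight_sub_le (hw0 : ∀ x, 0 ≤ w x) (s t x : ℝ) :
    |x * expWeight w s x - x * expWeight w t x| ≤
      |s - t| * (x ^ 2 * expWeight w t x + x ^ 2 * expWeight w s x) := by
  have ht := expWeight_nonneg hw0 t x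
  calc |x * expWeight w s x - x * expWeight w t x|
      = |x| * (expWeight w t x * |Real.exp (-((s - t) * x)) - 1|) := by
        rw [← mul_sub, expWeight_eq_mul w s t, ← mul_sub_one, abs_mul, abs_mul, abs_of_nonneg ht]
    _ ≤ |x| * (expWeight w t x * (|(s - t) * x| * (1 + Real.exp (-((s - t) * x))))) := by
        gcongr
        exact abs_exp_neg_sub_one_le _
    _ = |s - t| * (x ^ 2 * expWeight w t x + x ^ 2 * expWeight w s x) := by
        rw [expWeight_eq_mul w s t, abs_mul, ← sq_abs x]
        ring

theorem abs_expWeight_sub_add_le (hw0 : ∀ x, 0 ≤ w x) (s t x : ℝ) :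
    |expWeight w s x - expWeight w t x + (s - t) * (x * expWeight w t x)| ≤
      (s - t) ^ 2 * (x ^ 2 * expWeight w t x + x ^ 2 * expWeight w s x) := by
  have ht := expWeight_nonneg hw0 t x
  calc |expWeight w s x - expWeight w t x + (s - t) * (x * expWeight w t x)|
      = expWeight w t x * |Real.exp (-((s - t) * x)) - 1 + (s - t) * x| := by
        rw [← abs_of_nonneg ht, ← abs_mul, abs_of_nonneg ht, expWeight_eq_mul w s t]
        ring_nf
    _ ≤ expWeight w t x * (((s - t) * x) ^ 2 * (1 + Real.exp (-((s - t) * x)))) := by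
        gcongr
        exact abs_exp_neg_sub_one_add_le _
    _ = (s - t) ^ 2 * (x ^ 2 * expWeight w t x + x ^ 2 * expWeight w s x) := by
        rw [expWeight_eq_mul w s t]
        ring

section Decay

variable {C : ℝ} (hw : Continuous w) (hw0 : ∀ x, 0 ≤ w x)

include hw0 in
theorem sq_mul_expWeight_le (hC : ∀ x, (1 + x ^ 2) * expWeight w t x ≤ C) (x : ℝ) :
    x ^ 2 * expWeight w t x ≤ C :=
  (mul_le_mul_of_nonneg_right (by linarith) (expWeight_nonneg hw0 t x)).trans (hC x)

include hw hw0

theorem continuousAtEnds_expWeight (hC : ∀ x, (1 + x ^ 2) * expWeight w t x ≤ C) :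
    ContinuousAtEnds (expWeight w t) := by
  refine .of_abs_mul_le (continuous_expWeight hw t) fun x => le_trans ?_ (hC x)
  rw [abs_mul, abs_of_nonneg (expWeight_nonneg hw0 t x)]
  refine mul_le_mul_of_nonneg_right ?_ (expWeight_nonneg hw0 t x)
  nlinarith [sq_abs x, sq_nonneg (|x| - 1)]

theorem continuousAtEnds_mul_expWeight (hC : ∀ x, (1 + x ^ 2) * expWeight w t x ≤ C) :
    ContinuousAtEnds fun x => x * expWeight w t x := by
  refine .of_abs_mul_le (C := C) (continuous_id.mul (continuous_expWeight hw t)) fun x => ?_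
  rw [← mul_assoc, ← sq, abs_of_nonneg (mul_nonneg (sq_nonneg x) (expWeight_nonneg hw0 t x))]
  exact sq_mul_expWeight_le hw0 hC x

variable {A : H →ₗ.[ℂ] H} {Φ : (ℝ → ℝ) → H →L[ℂ] H}

theorem IsFunctionalCalculus.hasDerivAt_expWeight (hΦ : IsFunctionalCalculus A Φ)
    (hC : ∀ᶠ s in 𝓝 t, ∀ x, (1 + x ^ 2) * expWeight w s x ≤ C) :
    HasDerivAt (fun t => Φ (expWeight w t)) (-Φ fun x => x * expWeight w t x) t := by
  have ht := continuousAtEnds_expWeight hw hw0 hC.self_of_nhds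
  have hxt := (continuousAtEnds_mul_expWeight hw hw0 hC.self_of_nhds).const_mul
  have hbigO : (fun s => Φ (expWeight w s) - Φ (expWeight w t) -
      (s - t) • -Φ fun x => x * expWeight w t x) =O[𝓝 t] fun s => (s - t) ^ 2 := by
    refine .of_bound (C + C) (hC.mono fun s hCs => ?_)
    have hs := continuousAtEnds_expWeight hw hw0 hCs
    rw [smul_neg, sub_neg_eq_add, ← hΦ.map_sub hs ht,
      ← hΦ.map_const_mul _ (continuousAtEnds_mul_expWeight hw hw0 hC.self_of_nhds),
      ← hΦ.map_add (hs.sub ht) (hxt _), Real.norm_of_nonneg (sq_nonneg _), mul_comm]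
    refine hΦ.norm_le ((hs.sub ht).add (hxt _)) fun x =>
      (abs_expWeight_sub_add_le hw0 s t x).trans ?_
    gcongr
    · exact sq_mul_expWeight_le hw0 hC.self_of_nhds x
    · exact sq_mul_expWeight_le hw0 hCs x
  rw [hasDerivAt_iff_isLittleO]
  exact hbigO.trans_isLittleO (by simpa using Asymptotics.isLittleO_pow_sub_sub t one_lt_two)

theorem IsFunctionalCalculus.continuousAt_mul_expWeight (hΦ : IsFunctionalCalculus A Φ)
    (hC : ∀ᶠ s in 𝓝 t, ∀ x, (1 + x ^ 2) * expWeight w s x ≤ C) :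
    ContinuousAt (fun s => Φ fun x => x * expWeight w s x) t := by
  have ht := continuousAtEnds_mul_expWeight hw hw0 hC.self_of_nhds
  refine tendsto_iff_norm_sub_tendsto_zero.2 <| squeeze_zero' (g := fun s => |s - t| * (C + C))
    (.of_forall fun _ => norm_nonneg _) (hC.mono fun s hCs => ?_)
    (Continuous.tendsto' (by fun_prop) t 0 (by simp))
  have hs := continuousAtEnds_mul_expWeight hw hw0 hCs
  rw [← hΦ.map_sub hs ht]
  refine hΦ.norm_le (hs.sub ht) fun x => (abs_mul_expWeight_sub_le hw0 s t x).trans ?_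
  gcongr
  · exact sq_mul_expWeight_le hw0 hC.self_of_nhds x
  · exact sq_mul_expWeight_le hw0 hCs x

end Decay

variable {A : H →ₗ.[ℂ] H} {Φ : (ℝ → ℝ) → H →L[ℂ] H} {s' t' : ℝ}

theorem IsFunctionalCalculus.expWeight_mul_expWeight (hΦ : IsFunctionalCalculus A Φ)
    (ht : ContinuousAtEnds (expWeight w t)) (hs : ContinuousAtEnds (expWeight w' s))
    (ht' : ContinuousAtEnds (expWeight w t')) (hs' : ContinuousAtEnds (expWeight w' s'))
    (hsum : t + s = t' + s') :
    Φ (expWeight w t) * Φ (expWeight w' s) = Φ (expWeight w t') * Φ (expWeight w' s') := by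
  rw [← hΦ.map_mul ht hs, ← hΦ.map_mul ht' hs']
  congr 1
  funext x
  have hexp : Real.exp (-(t * x)) * Real.exp (-(s * x)) =
      Real.exp (-(t' * x)) * Real.exp (-(s' * x)) := by
    rw [← Real.exp_add, ← Real.exp_add, ← neg_add, ← neg_add, ← add_mul, ← add_mul, hsum]
  simp only [expWeight]
  rw [mul_mul_mul_comm, hexp, mul_mul_mul_comm]

end ExponentialFamily

section Gaussian

/-- The function `x ↦ exp (-t x - x² / 2)`. -/
def gaussianExp : ℝ → ℝ → ℝ := expWeight fun x => Real.exp (-(x ^ 2 / 2))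

theorem gaussianExp_pos (t x : ℝ) : 0 < gaussianExp t x :=
  mul_pos (Real.exp_pos _) (Real.exp_pos _)

theorem one_add_sq_mul_gaussianExp_le (t x : ℝ) :
    (1 + x ^ 2) * gaussianExp t x ≤ 5 * Real.exp (t ^ 2) := by
  have hsq : gaussianExp t x ≤ Real.exp (t ^ 2) * Real.exp (-(1 / 4 * x ^ 2)) := by
    rw [gaussianExp, expWeight, ← Real.exp_add, ← Real.exp_add]
    exact Real.exp_le_exp.2 (by nlinarith [sq_nonneg (t + x / 2)])
  have hle_one : Real.exp (-(1 / 4 * x ^ 2)) ≤ 1 :=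
    Real.exp_le_one_iff.2 (by nlinarith [sq_nonneg x])
  have hle_four : x ^ 2 * Real.exp (-(1 / 4 * x ^ 2)) ≤ 4 := by
    simpa using mul_exp_neg_le (show (0 : ℝ) < 1 / 4 by norm_num) (x ^ 2)
  calc (1 + x ^ 2) * gaussianExp t x
      ≤ (1 + x ^ 2) * (Real.exp (t ^ 2) * Real.exp (-(1 / 4 * x ^ 2))) := by gcongr
    _ = (Real.exp (-(1 / 4 * x ^ 2)) + x ^ 2 * Real.exp (-(1 / 4 * x ^ 2))) *
        Real.exp (t ^ 2) := by ring
    _ ≤ (1 + 4) * Real.exp (t ^ 2) := by gcongr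
    _ = 5 * Real.exp (t ^ 2) := by ring

theorem continuousAtEnds_gaussianExp (t : ℝ) : ContinuousAtEnds (gaussianExp t) :=
  continuousAtEnds_expWeight (by fun_prop) (fun _ => Real.exp_nonneg _)
    (one_add_sq_mul_gaussianExp_le t)

theorem continuousAtEnds_mul_gaussianExp (t : ℝ) : ContinuousAtEnds fun x => x * gaussianExp t x :=
  continuousAtEnds_mul_expWeight (by fun_prop) (fun _ => Real.exp_nonneg _)
    (one_add_sq_mul_gaussianExp_le t)

variable {A : H →ₗ.[ℂ] H} {Φ : (ℝ → ℝ) → H →L[ℂ] H}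

namespace IsFunctionalCalculus

theorem hasDerivAt_gaussianExp (hΦ : IsFunctionalCalculus A Φ) (t : ℝ) :
    HasDerivAt (fun t => Φ (gaussianExp t)) (-Φ fun x => x * gaussianExp t x) t := by
  refine hΦ.hasDerivAt_expWeight (C := 5 * Real.exp (t ^ 2 + 1)) (by fun_prop)
    (fun _ => Real.exp_nonneg _) ?_
  have hsq : ∀ᶠ s : ℝ in 𝓝 t, s ^ 2 < t ^ 2 + 1 :=
    (continuous_pow 2).continuousAt.eventually_lt_const (lt_add_one _)
  filter_upwards [hsq] with s hs x
  refine (one_add_sq_mul_gaussianExp_le s x).trans ?_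
  gcongr

theorem injective_gaussianExp (hΦ : IsFunctionalCalculus A Φ) (t : ℝ) :
    Function.Injective (Φ (gaussianExp t)) :=
  hΦ.injective (continuousAtEnds_gaussianExp t) fun x => (gaussianExp_pos t x).ne'

theorem gaussianExp_mul_gaussianExp (hΦ : IsFunctionalCalculus A Φ) {s t s' t' : ℝ}
    (hsum : s + t = s' + t') :
    Φ (gaussianExp s) * Φ (gaussianExp t) = Φ (gaussianExp s') * Φ (gaussianExp t') :=
  hΦ.expWeight_mul_expWeight (continuousAtEnds_gaussianExp _) (continuousAtEnds_gaussianExp _)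
    (continuousAtEnds_gaussianExp _) (continuousAtEnds_gaussianExp _) hsum

end IsFunctionalCalculus

end Gaussian

section Fermi

/-- The Fermi function `x ↦ e^{-tx} / (1 + e^{-τx})`; its values at `0` and `τ` sum to `1`. -/
def fermi (τ : ℝ) : ℝ → ℝ → ℝ := expWeight fun x => (1 + Real.exp (-(τ * x)))⁻¹

variable {τ t : ℝ}

theorem one_add_exp_pos (y : ℝ) : 0 < 1 + Real.exp y := by positivity

theorem continuous_inv_one_add_exp : Continuous fun x : ℝ => (1 + Real.exp (-(τ * x)))⁻¹ :=
  Continuous.inv₀ (by fun_prop) fun _ => (one_add_exp_pos _).ne'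

theorem inv_one_add_exp_nonneg (y : ℝ) : 0 ≤ (1 + Real.exp y)⁻¹ :=
  (inv_pos.2 (one_add_exp_pos y)).le

theorem fermi_pos (x : ℝ) : 0 < fermi τ t x :=
  mul_pos (Real.exp_pos _) (inv_pos.2 (one_add_exp_pos _))

theorem fermi_le_exp_neg_mul_abs {m : ℝ} (hmt : m ≤ t) (htm : t ≤ τ - m) (x : ℝ) :
    fermi τ t x ≤ Real.exp (-(m * |x|)) := by
  rw [fermi, expWeight, ← div_eq_mul_inv, div_le_iff₀ (one_add_exp_pos _), mul_add, mul_one,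
    ← Real.exp_add]
  rcases abs_cases x with ⟨habs, hx⟩ | ⟨habs, hx⟩ <;> rw [habs]
  · have hexp : Real.exp (-(t * x)) ≤ Real.exp (-(m * x)) := Real.exp_le_exp.2 (by nlinarith)
    linarith [Real.exp_pos (-(m * x) + -(τ * x))]
  · have hexp : Real.exp (-(t * x)) ≤ Real.exp (-(m * -x) + -(τ * x)) :=
      Real.exp_le_exp.2 (by nlinarith)
    linarith [Real.exp_pos (-(m * -x))]

theorem fermi_le_one (ht : t ∈ Icc 0 τ) (x : ℝ) : fermi τ t x ≤ 1 := by
  simpa using fermi_le_exp_neg_mul_abs ht.1 (by simpa using ht.2) x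

theorem abs_mul_fermi_le {m : ℝ} (hm : 0 < m) (hmt : m ≤ t) (htm : t ≤ τ - m) (x : ℝ) :
    |x * fermi τ t x| ≤ m⁻¹ :=
  calc |x * fermi τ t x| = |x| * fermi τ t x := by rw [abs_mul, abs_of_pos (fermi_pos x)]
    _ ≤ |x| * Real.exp (-(m * |x|)) := by
      gcongr
      exact fermi_le_exp_neg_mul_abs hmt htm x
    _ ≤ m⁻¹ := mul_exp_neg_le hm _

theorem one_add_sq_mul_fermi_le {m : ℝ} (hm : 0 < m) (hmt : m ≤ t) (htm : t ≤ τ - m) (x : ℝ) :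
    (1 + x ^ 2) * fermi τ t x ≤ 1 + ((m / 2)⁻¹) ^ 2 := by
  have hone : fermi τ t x ≤ 1 := fermi_le_one ⟨by linarith, by linarith⟩ x
  have hsq : x ^ 2 * fermi τ t x ≤ ((m / 2)⁻¹) ^ 2 :=
    calc x ^ 2 * fermi τ t x ≤ x ^ 2 * Real.exp (-(m * |x|)) := by
          gcongr
          exact fermi_le_exp_neg_mul_abs hmt htm x
      _ = (|x| * Real.exp (-(m / 2 * |x|))) ^ 2 := by
        rw [mul_pow, sq_abs, ← Real.exp_nat_mul]
        congr 2
        push_cast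
        ring
      _ ≤ ((m / 2)⁻¹) ^ 2 := by
        gcongr
        exact mul_exp_neg_le (half_pos hm) |x|
  linarith

theorem exists_eventually_one_add_sq_mul_fermi_le (ht : t ∈ Ioo 0 τ) :
    ∃ C, ∀ᶠ s in 𝓝 t, ∀ x, (1 + x ^ 2) * fermi τ s x ≤ C := by
  obtain ⟨m, hm, hmt⟩ := exists_between (lt_min ht.1 (sub_pos.2 ht.2))
  obtain ⟨hmt, hmτt⟩ := lt_min_iff.1 hmt
  refine ⟨1 + ((m / 2)⁻¹) ^ 2, ?_⟩
  filter_upwards [Ioo_mem_nhds hmt (show t < τ - m by linarith)] with s hs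
  exact one_add_sq_mul_fermi_le hm hs.1.le hs.2.le

theorem continuousAtEnds_mul_fermi (ht : t ∈ Ioo 0 τ) :
    ContinuousAtEnds fun x => x * fermi τ t x :=
  let ⟨_, hC⟩ := exists_eventually_one_add_sq_mul_fermi_le ht
  continuousAtEnds_mul_expWeight continuous_inv_one_add_exp
    (fun _ => inv_one_add_exp_nonneg _) hC.self_of_nhds

theorem fermi_zero_add_fermi_self (x : ℝ) : fermi τ 0 x + fermi τ τ x = 1 := by
  simp only [fermi, expWeight, zero_mul, neg_zero, Real.exp_zero, ← add_mul]
  exact mul_inv_cancel₀ (one_add_exp_pos _).ne'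

theorem continuousAtEnds_fermi_zero (hτ : 0 < τ) : ContinuousAtEnds (fermi τ 0) := by
  have hfermi : fermi τ 0 = fun x => (1 + Real.exp (-(τ * x)))⁻¹ := by
    funext x
    simp [fermi, expWeight]
  rw [hfermi]
  refine ⟨continuous_inv_one_add_exp, ⟨0, ?_⟩, ⟨1, ?_⟩⟩
  · have hneg : Tendsto (fun x : ℝ => -(τ * x)) atBot atTop :=
      tendsto_neg_atBot_atTop.comp (tendsto_id.const_mul_atBot hτ)
    exact (tendsto_atTop_add_const_left _ 1 (Real.tendsto_exp_atTop.comp hneg)).inv_tendsto_atTop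
  · have hneg : Tendsto (fun x : ℝ => -(τ * x)) atTop atBot :=
      tendsto_neg_atTop_atBot.comp (tendsto_id.const_mul_atTop hτ)
    simpa using ((Real.tendsto_exp_atBot.comp hneg).const_add 1).inv₀ (by norm_num)

theorem continuousAtEnds_fermi (hτ : 0 < τ) (ht : t ∈ Icc 0 τ) : ContinuousAtEnds (fermi τ t) := by
  rcases ht.1.eq_or_lt with rfl | ht0
  · exact continuousAtEnds_fermi_zero hτ
  rcases ht.2.eq_or_lt with rfl | htτ
  · have hfermi : fermi t t = fun x => 1 - fermi t 0 x :=
      funext fun x => eq_sub_of_add_eq' (fermi_zero_add_fermi_self x)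
    rw [hfermi]
    exact (ContinuousAtEnds.const 1).sub (continuousAtEnds_fermi_zero hτ)
  · obtain ⟨_, hC⟩ := exists_eventually_one_add_sq_mul_fermi_le ⟨ht0, htτ⟩
    exact continuousAtEnds_expWeight continuous_inv_one_add_exp
      (fun _ => inv_one_add_exp_nonneg _) hC.self_of_nhds

theorem continuousOn_apply_of_denseRange {𝕜 X E F : Type*} [NontriviallyNormedField 𝕜]
    [TopologicalSpace X] [NormedAddCommGroup E] [NormedSpace 𝕜 E] [NormedAddCommGroup F]
    [NormedSpace 𝕜 F] {ι : Type*} {N : ι → E} (hN : DenseRange N) {G : X → E →L[𝕜] F} {s : Set X}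
    {C : ℝ} (hC : ∀ t ∈ s, ‖G t‖ ≤ C) (hcont : ∀ i, ContinuousOn (fun t => G t (N i)) s) (v : E) :
    ContinuousOn (fun t => G t v) s := by
  refine continuousOn_of_uniform_approx_of_continuousOn fun u hu => ?_
  obtain ⟨ε, hε, hεu⟩ := Metric.mem_uniformity_dist.1 hu
  obtain ⟨i, hi⟩ := hN.exists_dist_lt v (show 0 < ε / (|C| + 1) by positivity)
  refine ⟨fun t => G t (N i), hcont i, fun t ht => hεu ?_⟩
  rw [dist_eq_norm, lt_div_iff₀ (by positivity)] at hi
  calc dist (G t v) (G t (N i)) = ‖G t (v - N i)‖ := by rw [dist_eq_norm, map_sub]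
    _ ≤ C * ‖v - N i‖ := ContinuousLinearMap.le_of_opNorm_le _ (hC t ht) _
    _ ≤ ‖v - N i‖ * (|C| + 1) := by nlinarith [le_abs_self C, norm_nonneg (v - N i)]
    _ < ε := hi

variable {A : H →ₗ.[ℂ] H} {Φ : (ℝ → ℝ) → H →L[ℂ] H}

namespace IsFunctionalCalculus

theorem norm_fermi_le (hΦ : IsFunctionalCalculus A Φ) (hτ : 0 < τ) (ht : t ∈ Icc 0 τ) :
    ‖Φ (fermi τ t)‖ ≤ 1 :=
  hΦ.norm_le (continuousAtEnds_fermi hτ ht) fun x =>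
    (abs_of_pos (fermi_pos x)).trans_le (fermi_le_one ht x)

theorem norm_mul_fermi_le (hΦ : IsFunctionalCalculus A Φ) (ht : t ∈ Ioo 0 τ) :
    ‖Φ fun x => x * fermi τ t x‖ ≤ t⁻¹ + (τ - t)⁻¹ := by
  refine hΦ.norm_le (continuousAtEnds_mul_fermi ht) fun x => ?_
  have ht0 : 0 < t := ht.1
  have htτ : 0 < τ - t := sub_pos.2 ht.2
  have hinv0 := inv_pos.2 ht0
  have hinvτ := inv_pos.2 htτ
  rcases le_total t (τ - t) with h | h
  · exact (abs_mul_fermi_le ht0 le_rfl (by linarith) x).trans (by linarith)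
  · exact (abs_mul_fermi_le htτ h (by linarith) x).trans (by linarith)

theorem hasDerivAt_fermi (hΦ : IsFunctionalCalculus A Φ) (ht : t ∈ Ioo 0 τ) :
    HasDerivAt (fun t => Φ (fermi τ t)) (-Φ fun x => x * fermi τ t x) t :=
  let ⟨_, hC⟩ := exists_eventually_one_add_sq_mul_fermi_le ht
  hΦ.hasDerivAt_expWeight continuous_inv_one_add_exp (fun _ => inv_one_add_exp_nonneg _) hC

theorem continuousOn_mul_fermi (hΦ : IsFunctionalCalculus A Φ) :
    ContinuousOn (fun t => Φ fun x => x * fermi τ t x) (Ioo 0 τ) := fun _ ht =>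
  let ⟨_, hC⟩ := exists_eventually_one_add_sq_mul_fermi_le ht
  (hΦ.continuousAt_mul_expWeight continuous_inv_one_add_exp
    (fun _ => inv_one_add_exp_nonneg _) hC).continuousWithinAt

theorem fermi_zero_add_fermi_self (hΦ : IsFunctionalCalculus A Φ) (hτ : 0 < τ) :
    Φ (fermi τ 0) + Φ (fermi τ τ) = 1 := by
  rw [← hΦ.map_add (continuousAtEnds_fermi hτ ⟨le_rfl, hτ.le⟩)
    (continuousAtEnds_fermi hτ ⟨hτ.le, le_rfl⟩), ← hΦ.map_one]
  exact congrArg Φ (funext _root_.fermi_zero_add_fermi_self)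

theorem gaussianExp_mul_fermi (hΦ : IsFunctionalCalculus A Φ) (hτ : 0 < τ) {s r s' r' : ℝ}
    (hr : r ∈ Icc 0 τ) (hr' : r' ∈ Icc 0 τ) (hsum : s + r = s' + r') :
    Φ (gaussianExp s) * Φ (fermi τ r) = Φ (gaussianExp s') * Φ (fermi τ r') :=
  hΦ.expWeight_mul_expWeight (continuousAtEnds_gaussianExp _) (continuousAtEnds_fermi hτ hr)
    (continuousAtEnds_gaussianExp _) (continuousAtEnds_fermi hτ hr') hsum

/-- On the dense range of the Gaussian, `E(t) e^{-A²/2} = e^{-tA - A²/2} E(0)` is norm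
differentiable even at the end points. -/
theorem continuousOn_fermi_apply (hΦ : IsFunctionalCalculus A Φ) (hτ : 0 < τ) (v : H) :
    ContinuousOn (fun t => Φ (fermi τ t) v) (Icc 0 τ) := by
  have hdense : DenseRange (Φ (gaussianExp 0)) := denseRange_of_isSelfAdjoint_of_injective
    (hΦ.isSelfAdjoint _) (hΦ.injective_gaussianExp 0)
  refine continuousOn_apply_of_denseRange hdense (fun t ht => hΦ.norm_fermi_le hτ ht)
    (fun w => ?_) v
  have hcont : Continuous fun t => Φ (gaussianExp t) (Φ (fermi τ 0) w) :=
    continuous_iff_continuousAt.2 fun t =>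
      (hΦ.hasDerivAt_gaussianExp t).continuousAt.clm_apply continuousAt_const
  refine hcont.continuousOn.congr fun t ht => ?_
  have hmul : Φ (fermi τ t) * Φ (gaussianExp 0) = Φ (gaussianExp t) * Φ (fermi τ 0) := by
    rw [(hΦ.commute_map (continuousAtEnds_fermi hτ ht) (continuousAtEnds_gaussianExp 0)).eq,
      hΦ.gaussianExp_mul_fermi hτ ht ⟨le_rfl, hτ.le⟩ (by ring)]
  exact DFunLike.congr_fun hmul w

end IsFunctionalCalculus

end Fermi

section ParticularSolution

open MeasureTheory
open scoped BoundedContinuousFunction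

section Calculus

variable {E F : Type*} [NormedAddCommGroup E] [NormedAddCommGroup F]

theorem hasDerivAt_complexCLM_apply [NormedSpace ℂ E] [NormedSpace ℂ F] {V : ℝ → E →L[ℂ] F}
    {V' : E →L[ℂ] F} {u : ℝ → E} {u' : E} {x : ℝ} (hV : HasDerivAt V V' x)
    (hu : HasDerivAt u u' x) : HasDerivAt (fun x => V x (u x)) (V' (u x) + V x u') x :=
  ((ContinuousLinearMap.restrictScalarsL ℂ E F ℝ ℝ).hasFDerivAt.comp_hasDerivAt x hV).clm_apply hu

theorem stronglyMeasurable_ite_lt {p q : ℝ → E} (hp : Continuous p) (hq : Continuous q) (x : ℝ) :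
    StronglyMeasurable fun r => if r < x then p r else q r :=
  .ite measurableSet_Iio hp.stronglyMeasurable hq.stronglyMeasurable

variable [NormedSpace ℝ E]

/-- `K ψ` and `K Θ`, with `Θ` a primitive of `v`, differ by a constant, so `ψ - Θ` is constant. -/
theorem hasDerivAt_of_injective_comp [CompleteSpace E] [NormedSpace ℝ F] {K : E →L[ℝ] F}
    (hK : Function.Injective K) {a b : ℝ} {ψ v : ℝ → E} (hv : ContinuousOn v (Ioo a b))
    (hKψ : ∀ x ∈ Ioo a b, HasDerivAt (fun x => K (ψ x)) (K (v x)) x) {x : ℝ} (hx : x ∈ Ioo a b) :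
    HasDerivAt ψ (v x) x := by
  let Θ : ℝ → E := fun y => ψ x + ∫ r in x..y, v r
  have hΘ : ∀ y ∈ Ioo a b, HasDerivAt Θ (v y) y := fun y hy =>
    (intervalIntegral.integral_hasDerivAt_right
      ((hv.mono (ordConnected_Ioo.uIcc_subset hx hy)).intervalIntegrable)
      (hv.stronglyMeasurableAtFilter isOpen_Ioo y hy)
      (hv.continuousAt (isOpen_Ioo.mem_nhds hy))).const_add _
  have hdiff : ∀ y ∈ Ioo a b, HasDerivAt (fun y => K (Θ y) - K (ψ y)) 0 y := fun y hy => by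
    simpa using (K.hasFDerivAt.comp_hasDerivAt y (hΘ y hy)).fun_sub (hKψ y hy)
  have hψΘ : ∀ y ∈ Ioo a b, ψ y = Θ y := fun y hy => by
    have hconst := isOpen_Ioo.is_const_of_deriv_eq_zero isPreconnected_Ioo
      (fun z hz => (hdiff z hz).differentiableAt.differentiableWithinAt)
      (fun z hz => (hdiff z hz).deriv) hy hx
    refine hK (sub_eq_zero.1 ?_).symm
    simpa [Θ] using hconst
  refine (hΘ x hx).congr_of_eventuallyEq ?_
  filter_upwards [isOpen_Ioo.mem_nhds hx] with y hy using hψΘ y hy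

theorem integral_ite_lt {p q : ℝ → E} {a b x : ℝ} (hx : x ∈ Icc a b)
    (hp : IntervalIntegrable p volume a b) (hq : IntervalIntegrable q volume a b) :
    ∫ r in a..b, (if r < x then p r else q r) = (∫ r in a..x, p r) + ∫ r in x..b, q r := by
  have hpEq : EqOn p (fun r => if r < x then p r else q r) (Ioo a x) := fun r hr =>
    (if_pos hr.2).symm
  have hqEq : EqOn q (fun r => if r < x then p r else q r) (Ioo x b) := fun r hr =>
    (if_neg hr.1.not_gt).symm
  have hx' : x ∈ uIcc a b := Icc_subset_uIcc hx
  rw [intervalIntegral.integral_congr_Ioo_of_le hx.1 hpEq,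
    intervalIntegral.integral_congr_Ioo_of_le hx.2 hqEq,
    intervalIntegral.integral_add_adjacent_intervals]
  · exact (hp.mono_set (uIcc_subset_uIcc left_mem_uIcc hx')).congr_uIoo (uIoo_of_le hx.1 ▸ hpEq)
  · exact (hq.mono_set (uIcc_subset_uIcc hx' right_mem_uIcc)).congr_uIoo (uIoo_of_le hx.2 ▸ hqEq)

theorem continuousAt_ite_lt {X : Type*} [TopologicalSpace X] {p q : ℝ → X} (hp : Continuous p)
    (hq : Continuous q) {x r : ℝ} (hr : r ≠ x) :
    ContinuousAt (fun x => if r < x then p x else q x) x := by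
  rcases hr.lt_or_gt with h | h
  · refine hp.continuousAt.congr ?_
    filter_upwards [Ioi_mem_nhds h] with y hy using (if_pos hy).symm
  · refine hq.continuousAt.congr ?_
    filter_upwards [Iio_mem_nhds h] with y hy using (if_neg (not_lt_of_gt hy)).symm

end Calculus

theorem aestronglyMeasurable_clm_apply {𝕜 E F : Type*} [NontriviallyNormedField 𝕜]
    [NormedAddCommGroup E] [NormedSpace 𝕜 E] [NormedAddCommGroup F] [NormedSpace 𝕜 F]
    {V : ℝ → E →L[𝕜] F} {a b : ℝ} (hab : a ≤ b) (hV : ContinuousOn V (Ioo a b)) {g : ℝ → E}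
    (hg : StronglyMeasurable g) :
    AEStronglyMeasurable (fun r => V r (g r)) (volume.restrict (uIoc a b)) := by
  rw [uIoc_of_le hab, ← Measure.restrict_congr_set Ioo_ae_eq_Ioc]
  exact (ContinuousLinearMap.id 𝕜 (E →L[𝕜] F)).aestronglyMeasurable_comp₂
    (hV.aestronglyMeasurable measurableSet_Ioo) hg.aestronglyMeasurable

variable {A : H →ₗ.[ℂ] H} {Φ : (ℝ → ℝ) → H →L[ℂ] H} {τ : ℝ}

theorem integral_mem_graph (hA : IsSelfAdjoint A) {g h : ℝ → H} {a b : ℝ} (hab : a ≤ b)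
    (hg : IntervalIntegrable g volume a b) (hh : IntervalIntegrable h volume a b)
    (hgh : ∀ r ∈ Ioo a b, (g r, h r) ∈ A.graph) :
    (∫ r in a..b, g r, ∫ r in a..b, h r) ∈ A.graph := by
  refine (mem_graph_iff_forall_inner hA).2 fun c d hcd => ?_
  calc ⟪d, ∫ r in a..b, g r⟫_ℂ = ∫ r in a..b, ⟪d, g r⟫_ℂ :=
        ((innerSL ℂ d).intervalIntegral_comp_comm hg).symm
    _ = ∫ r in a..b, ⟪c, h r⟫_ℂ := intervalIntegral.integral_congr_Ioo_of_le hab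
        fun r hr => inner_comm_of_mem_graph hA hcd (hgh r hr)
    _ = ⟪c, ∫ r in a..b, h r⟫_ℂ := (innerSL ℂ c).intervalIntegral_comp_comm hh

namespace IsFunctionalCalculus

theorem continuousOn_fermi (hΦ : IsFunctionalCalculus A Φ) :
    ContinuousOn (fun r => Φ (fermi τ r)) (Ioo 0 τ) :=
  fun _ hr => (hΦ.hasDerivAt_fermi hr).continuousAt.continuousWithinAt

theorem norm_fermi_apply_le (hΦ : IsFunctionalCalculus A Φ) (hτ : 0 < τ) {r : ℝ}
    (hr : r ∈ Icc 0 τ) (v : H) : ‖Φ (fermi τ r) v‖ ≤ ‖v‖ := by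
  simpa using ContinuousLinearMap.le_of_opNorm_le _ (hΦ.norm_fermi_le hτ hr) v

theorem intervalIntegrable_fermi_apply (hΦ : IsFunctionalCalculus A Φ) (hτ : 0 < τ) {g : ℝ → H}
    (hg : StronglyMeasurable g) {C : ℝ} (hC : ∀ r, ‖g r‖ ≤ C) :
    IntervalIntegrable (fun r => Φ (fermi τ r) (g r)) volume 0 τ := by
  refine (intervalIntegrable_const (c := C)).mono_fun'
    (aestronglyMeasurable_clm_apply hτ.le hΦ.continuousOn_fermi hg) ?_
  refine (ae_restrict_mem measurableSet_uIoc).mono fun r hr => ?_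
  rw [uIoc_of_le hτ.le] at hr
  exact (hΦ.norm_fermi_apply_le hτ (Ioc_subset_Icc_self hr) _).trans (hC r)

theorem intervalIntegrable_fermi_comp_sub_left (hΦ : IsFunctionalCalculus A Φ) (hτ : 0 < τ)
    (F : ℝ →ᵇ H) (c : ℝ) : IntervalIntegrable (fun r => Φ (fermi τ r) (F (c - r))) volume 0 τ :=
  hΦ.intervalIntegrable_fermi_apply hτ (by fun_prop : Continuous _).stronglyMeasurable
    fun _ => F.norm_coe_le_norm _

theorem integral_fermi_mem_graph (hΦ : IsFunctionalCalculus A Φ) (hA : IsSelfAdjoint A)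
    (hτ : 0 < τ) {a b : ℝ} (ha : 0 ≤ a) (hab : a ≤ b) (hb : b ≤ τ) (v : H) :
    (∫ r in a..b, Φ (fermi τ r) v, Φ (fermi τ a) v - Φ (fermi τ b) v) ∈ A.graph := by
  have hcont : ContinuousOn (fun r => Φ (fermi τ r) v) (Icc a b) :=
    (hΦ.continuousOn_fermi_apply hτ v).mono (Icc_subset_Icc ha hb)
  refine (mem_graph_iff_forall_inner hA).2 fun w w' hw => ?_
  have hderiv : ∀ r ∈ Ioo a b,
      HasDerivAt (fun r => -⟪w, Φ (fermi τ r) v⟫_ℂ) ⟪w', Φ (fermi τ r) v⟫_ℂ r := fun r hr => by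
    have hr' : r ∈ Ioo 0 τ := ⟨ha.trans_lt hr.1, hr.2.trans_le hb⟩
    have hmem := hΦ.mem_graph (continuousAtEnds_fermi hτ (Ioo_subset_Icc_self hr'))
      (continuousAtEnds_mul_fermi hr') v
    have hinner := ((hasDerivAt_const r w).inner ℂ
      (hasDerivAt_complexCLM_apply (hΦ.hasDerivAt_fermi hr') (hasDerivAt_const r v))).fun_neg
    simpa [inner_comm_of_mem_graph hA hw hmem] using hinner
  calc ⟪w', ∫ r in a..b, Φ (fermi τ r) v⟫_ℂ = ∫ r in a..b, ⟪w', Φ (fermi τ r) v⟫_ℂ :=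
        ((innerSL ℂ w').intervalIntegral_comp_comm (hcont.intervalIntegrable_of_Icc hab)).symm
    _ = -⟪w, Φ (fermi τ b) v⟫_ℂ - -⟪w, Φ (fermi τ a) v⟫_ℂ :=
        intervalIntegral.integral_eq_sub_of_hasDerivAt_of_le hab
          (continuousOn_const.inner hcont).neg hderiv
          ((continuousOn_const.inner hcont).intervalIntegrable_of_Icc hab)
    _ = ⟪w, Φ (fermi τ a) v - Φ (fermi τ b) v⟫_ℂ := by
        rw [inner_sub_right]
        ring

end IsFunctionalCalculus

section AntiperiodicExtension

variable {V : Type*} [NormedAddCommGroup V]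

/-- The function `F` on `[0, τ]`, extended antiperiodically to `[-τ, τ]`, evaluated at `x - r`. -/
def antiperiodicShift (τ : ℝ) (F : ℝ → V) (x r : ℝ) : V :=
  if r < x then F (x - r) else -F (x + τ - r)

/-- The difference of `antiperiodicShift τ F x r` and `± F x`, which vanishes at both singularities
`r = 0` and `r = τ` of the kernel `A E(r)`. -/
def antiperiodicIncrement (τ : ℝ) (F : ℝ → V) (x r : ℝ) : V :=
  if r < x then F (x - r) - F x else F x - F (x + τ - r)

theorem norm_antiperiodicShift_le (F : ℝ →ᵇ V) (x r : ℝ) : ‖antiperiodicShift τ F x r‖ ≤ ‖F‖ := by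
  unfold antiperiodicShift
  split_ifs
  · exact F.norm_coe_le_norm _
  · rw [norm_neg]
    exact F.norm_coe_le_norm _

theorem norm_antiperiodicIncrement_le (F : ℝ →ᵇ V) (x r : ℝ) :
    ‖antiperiodicIncrement τ F x r‖ ≤ ‖F‖ + ‖F‖ := by
  unfold antiperiodicIncrement
  split_ifs <;>
    exact (norm_sub_le _ _).trans (add_le_add (F.norm_coe_le_norm _) (F.norm_coe_le_norm _))

theorem antiperiodicShift_eq_add (F : ℝ → V) (x r : ℝ) : antiperiodicShift τ F x r =
    antiperiodicIncrement τ F x r + if r < x then F x else -F x := by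
  unfold antiperiodicShift antiperiodicIncrement
  split_ifs <;> abel

theorem stronglyMeasurable_antiperiodicIncrement {F : ℝ → V} (hF : Continuous F) (x : ℝ) :
    StronglyMeasurable (antiperiodicIncrement τ F x) :=
  stronglyMeasurable_ite_lt (by fun_prop) (by fun_prop) x

end AntiperiodicExtension

/-- The convolution of the kernel `fermi` with the antiperiodic extension of `F`, a solution of
`ψ' = -A ψ + F`. -/
def particularSolution (Φ : (ℝ → ℝ) → H →L[ℂ] H) (τ : ℝ) (F : ℝ → H) (x : ℝ) : H :=
  ∫ r in 0..τ, Φ (fermi τ r) (antiperiodicShift τ F x r)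

/-- The image of `particularSolution Φ τ F x` under `A`. -/
def particularImage (Φ : (ℝ → ℝ) → H →L[ℂ] H) (τ : ℝ) (F : ℝ → H) (x : ℝ) : H :=
  (∫ r in 0..τ, Φ (fun y => y * fermi τ r y) (antiperiodicIncrement τ F x r)) +
    (F x - (2 : ℝ) • Φ (fermi τ x) (F x))

/-- An integrable majorant in `r` of `‖A E(r) (antiperiodicIncrement τ F x r)‖`, uniform in
`x ∈ (δ, τ - δ)`, for a function `F` with Hölder constant `K` and exponent `k`. -/
def holderMajorant (K k τ δ r : ℝ) : ℝ :=
  K * (r ^ (k - 1) + (τ - r) ^ (k - 1) + δ⁻¹ * τ ^ k)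

theorem intervalIntegrable_holderMajorant {k : ℝ} (hk : 0 < k) (K τ δ : ℝ) :
    IntervalIntegrable (holderMajorant K k τ δ) volume 0 τ := by
  have hpow : IntervalIntegrable (fun r : ℝ => r ^ (k - 1)) volume 0 τ :=
    intervalIntegral.intervalIntegrable_rpow' (by linarith)
  have hpow' : IntervalIntegrable (fun r : ℝ => (τ - r) ^ (k - 1)) volume 0 τ := by
    simpa using (hpow.comp_sub_left τ).symm
  exact ((hpow.add hpow').add intervalIntegrable_const).const_mul K

theorem add_inv_mul_rpow_le {K k τ δ r s : ℝ} (hK : 0 ≤ K) (hk : 0 ≤ k) (hr : 0 < r)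
    (hrτ : r ≤ τ) (hδ : 0 < δ) (hs : δ ≤ s) :
    (r⁻¹ + s⁻¹) * (K * r ^ k) ≤ K * (r ^ (k - 1) + δ⁻¹ * τ ^ k) :=
  calc (r⁻¹ + s⁻¹) * (K * r ^ k) = K * (r⁻¹ * r ^ k + s⁻¹ * r ^ k) := by ring
    _ ≤ K * (r ^ (k - 1) + δ⁻¹ * τ ^ k) := by
      rw [Real.rpow_sub_one hr.ne', div_eq_inv_mul]
      gcongr

theorem exists_mem_Ioo_sub {x : ℝ} (hx : x ∈ Ioo 0 τ) : ∃ δ > 0, x ∈ Ioo δ (τ - δ) := by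
  obtain ⟨δ, hδ, hδx⟩ := exists_between (lt_min hx.1 (sub_pos.2 hx.2))
  obtain ⟨hδx, hδτ⟩ := lt_min_iff.1 hδx
  exact ⟨δ, hδ, hδx, by linarith⟩

namespace IsFunctionalCalculus

theorem continuous_particularSolution (hΦ : IsFunctionalCalculus A Φ) (hτ : 0 < τ)
    (F : ℝ →ᵇ H) : Continuous (particularSolution Φ τ F) := by
  refine continuous_iff_continuousAt.2 fun x =>
    intervalIntegral.continuousAt_of_dominated_interval (bound := fun _ => ‖F‖)
      (.of_forall fun y => ?_) (.of_forall fun y => .of_forall fun r hr => ?_)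
      intervalIntegrable_const ?_
  · exact aestronglyMeasurable_clm_apply hτ.le hΦ.continuousOn_fermi
      (stronglyMeasurable_ite_lt (by fun_prop) (by fun_prop) y)
  · rw [uIoc_of_le hτ.le] at hr
    exact (hΦ.norm_fermi_apply_le hτ (Ioc_subset_Icc_self hr) _).trans
      (norm_antiperiodicShift_le F y r)
  · filter_upwards [Measure.ae_ne volume x] with r hr _
    exact (Φ (fermi τ r)).continuous.continuousAt.comp
      (continuousAt_ite_lt (p := fun x => F (x - r)) (q := fun x => -F (x + τ - r))
        (by fun_prop) (by fun_prop) hr)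

theorem particularSolution_eq (hΦ : IsFunctionalCalculus A Φ) (hτ : 0 < τ) (F : ℝ →ᵇ H) {x : ℝ}
    (hx : x ∈ Icc 0 τ) :
    particularSolution Φ τ F x = (∫ r in 0..x, Φ (fermi τ r) (F (x + 0 - r))) -
      ∫ r in x..τ, Φ (fermi τ r) (F (x + τ - r)) := by
  rw [sub_eq_add_neg, ← intervalIntegral.integral_neg]
  refine Eq.trans ?_ (integral_ite_lt hx (hΦ.intervalIntegrable_fermi_comp_sub_left hτ F _)
    (hΦ.intervalIntegrable_fermi_comp_sub_left hτ F _).neg)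
  simp only [particularSolution, antiperiodicShift, apply_ite (Φ _), map_neg, add_zero]

section Increment

variable {F : ℝ →ᵇ H} {K k : NNReal}

theorem norm_mul_fermi_antiperiodicIncrement_le (hΦ : IsFunctionalCalculus A Φ)
    (hF : HolderWith K k F) {δ x r : ℝ} (hδ : 0 < δ) (hx : x ∈ Ioo δ (τ - δ)) (hr : r ∈ Ioo 0 τ) :
    ‖Φ (fun y => y * fermi τ r y) (antiperiodicIncrement τ F x r)‖ ≤
      holderMajorant K k τ δ r := by
  have hr0 : 0 < r := hr.1
  have hrτ : 0 < τ - r := sub_pos.2 hr.2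
  have hpow : 0 ≤ r ^ (k - 1 : ℝ) := Real.rpow_nonneg hr0.le _
  have hpow' : 0 ≤ (τ - r) ^ (k - 1 : ℝ) := Real.rpow_nonneg hrτ.le _
  refine (ContinuousLinearMap.le_of_opNorm_le _ (hΦ.norm_mul_fermi_le hr) _).trans ?_
  unfold antiperiodicIncrement holderMajorant
  split_ifs with hrx
  · have hdist : ‖F (x - r) - F x‖ ≤ K * r ^ (k : ℝ) := by
      simpa [dist_eq_norm, abs_of_pos hr0] using hF.dist_le (x - r) x
    calc (r⁻¹ + (τ - r)⁻¹) * ‖F (x - r) - F x‖ ≤ (r⁻¹ + (τ - r)⁻¹) * (K * r ^ (k : ℝ)) := by gcongr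
      _ ≤ K * (r ^ (k - 1 : ℝ) + δ⁻¹ * τ ^ (k : ℝ)) :=
        add_inv_mul_rpow_le K.2 k.2 hr0 hr.2.le hδ (by linarith [hx.2])
      _ ≤ _ := by
        gcongr
        linarith
  · have hdist : ‖F x - F (x + τ - r)‖ ≤ K * (τ - r) ^ (k : ℝ) := by
      simpa [dist_eq_norm, add_sub_assoc, abs_sub_comm r, abs_of_pos hrτ] using
        hF.dist_le x (x + τ - r)
    calc (r⁻¹ + (τ - r)⁻¹) * ‖F x - F (x + τ - r)‖
        ≤ ((τ - r)⁻¹ + r⁻¹) * (K * (τ - r) ^ (k : ℝ)) := by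
          rw [add_comm]
          gcongr
      _ ≤ K * ((τ - r) ^ (k - 1 : ℝ) + δ⁻¹ * τ ^ (k : ℝ)) :=
        add_inv_mul_rpow_le K.2 k.2 hrτ (by linarith) hδ (by linarith [hx.1])
      _ ≤ _ := by
        gcongr
        linarith

theorem ae_norm_mul_fermi_antiperiodicIncrement_le (hΦ : IsFunctionalCalculus A Φ) (hτ : 0 < τ)
    (hF : HolderWith K k F) {δ x : ℝ} (hδ : 0 < δ) (hx : x ∈ Ioo δ (τ - δ)) :
    ∀ᵐ r : ℝ, r ∈ uIoc 0 τ → ‖Φ (fun y => y * fermi τ r y) (antiperiodicIncrement τ F x r)‖ ≤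
      holderMajorant K k τ δ r := by
  filter_upwards [Measure.ae_ne volume τ] with r hrτ hr
  rw [uIoc_of_le hτ.le] at hr
  exact hΦ.norm_mul_fermi_antiperiodicIncrement_le hF hδ hx ⟨hr.1, hr.2.lt_of_ne hrτ⟩

theorem aestronglyMeasurable_mul_fermi_antiperiodicIncrement (hΦ : IsFunctionalCalculus A Φ)
    (hτ : 0 < τ) {F : ℝ → H} (hF : Continuous F) (x : ℝ) : AEStronglyMeasurable
      (fun r => Φ (fun y => y * fermi τ r y) (antiperiodicIncrement τ F x r))
      (volume.restrict (uIoc 0 τ)) :=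
  aestronglyMeasurable_clm_apply hτ.le hΦ.continuousOn_mul_fermi
    (stronglyMeasurable_antiperiodicIncrement hF x)

theorem intervalIntegrable_mul_fermi_antiperiodicIncrement (hΦ : IsFunctionalCalculus A Φ)
    (hτ : 0 < τ) (hk : 0 < k) (hF : HolderWith K k F) {x : ℝ} (hx : x ∈ Ioo 0 τ) :
    IntervalIntegrable (fun r => Φ (fun y => y * fermi τ r y) (antiperiodicIncrement τ F x r))
      volume 0 τ := by
  obtain ⟨δ, hδ, hxδ⟩ := exists_mem_Ioo_sub hx
  exact (intervalIntegrable_holderMajorant (NNReal.coe_pos.2 hk) K τ δ).mono_fun'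
    (hΦ.aestronglyMeasurable_mul_fermi_antiperiodicIncrement hτ F.continuous x)
    ((ae_restrict_iff' measurableSet_uIoc).2
      (hΦ.ae_norm_mul_fermi_antiperiodicIncrement_le hτ hF hδ hxδ))

theorem continuousOn_particularImage (hΦ : IsFunctionalCalculus A Φ) (hτ : 0 < τ) (hk : 0 < k)
    (hF : HolderWith K k F) : ContinuousOn (particularImage Φ τ F) (Ioo 0 τ) := by
  refine ContinuousOn.add (fun x hx => ContinuousAt.continuousWithinAt ?_)
    (F.continuous.continuousOn.sub
      ((hΦ.continuousOn_fermi.clm_apply F.continuous.continuousOn).const_smul _))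
  obtain ⟨δ, hδ, hxδ⟩ := exists_mem_Ioo_sub hx
  refine intervalIntegral.continuousAt_of_dominated_interval
    (.of_forall (hΦ.aestronglyMeasurable_mul_fermi_antiperiodicIncrement hτ F.continuous)) ?_
    (intervalIntegrable_holderMajorant (NNReal.coe_pos.2 hk) K τ δ) ?_
  · filter_upwards [isOpen_Ioo.mem_nhds hxδ] with y hy
    exact hΦ.ae_norm_mul_fermi_antiperiodicIncrement_le hτ hF hδ hy
  · filter_upwards [Measure.ae_ne volume x] with r hr _
    exact (Φ fun y => y * fermi τ r y).continuous.continuousAt.comp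
      (continuousAt_ite_lt (p := fun x => F (x - r) - F x) (q := fun x => F x - F (x + τ - r))
        (by fun_prop) (by fun_prop) hr)

theorem intervalIntegrable_fermi_antiperiodicIncrement (hΦ : IsFunctionalCalculus A Φ)
    (hτ : 0 < τ) (F : ℝ →ᵇ H) (x : ℝ) :
    IntervalIntegrable (fun r => Φ (fermi τ r) (antiperiodicIncrement τ F x r)) volume 0 τ :=
  hΦ.intervalIntegrable_fermi_apply hτ (stronglyMeasurable_antiperiodicIncrement F.continuous x)
    (norm_antiperiodicIncrement_le F x)

theorem integral_fermi_antiperiodicIncrement_mem_graph (hΦ : IsFunctionalCalculus A Φ)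
    (hA : IsSelfAdjoint A) (hτ : 0 < τ) (hk : 0 < k) (hF : HolderWith K k F) {x : ℝ}
    (hx : x ∈ Ioo 0 τ) :
    (∫ r in 0..τ, Φ (fermi τ r) (antiperiodicIncrement τ F x r),
      ∫ r in 0..τ, Φ (fun y => y * fermi τ r y) (antiperiodicIncrement τ F x r)) ∈ A.graph :=
  integral_mem_graph hA hτ.le (hΦ.intervalIntegrable_fermi_antiperiodicIncrement hτ F x)
    (hΦ.intervalIntegrable_mul_fermi_antiperiodicIncrement hτ hk hF hx)
    fun _ hr => hΦ.mem_graph (continuousAtEnds_fermi hτ (Ioo_subset_Icc_self hr))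
      (continuousAtEnds_mul_fermi hr) _

end Increment

theorem fermi_zero_apply_add_fermi_self_apply (hΦ : IsFunctionalCalculus A Φ) (hτ : 0 < τ)
    (v : H) : Φ (fermi τ 0) v + Φ (fermi τ τ) v = v :=
  DFunLike.congr_fun (hΦ.fermi_zero_add_fermi_self hτ) v

theorem intervalIntegrable_fermi_const (hΦ : IsFunctionalCalculus A Φ) (hτ : 0 < τ) (v : H) :
    IntervalIntegrable (fun r => Φ (fermi τ r) v) volume 0 τ :=
  (hΦ.continuousOn_fermi_apply hτ v).intervalIntegrable_of_Icc hτ.le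

theorem integral_fermi_ite_neg_mem_graph (hΦ : IsFunctionalCalculus A Φ) (hA : IsSelfAdjoint A)
    (hτ : 0 < τ) {x : ℝ} (hx : x ∈ Icc 0 τ) (v : H) :
    (∫ r in 0..τ, Φ (fermi τ r) (if r < x then v else -v), v - (2 : ℝ) • Φ (fermi τ x) v)
      ∈ A.graph := by
  have hinteg := hΦ.intervalIntegrable_fermi_const hτ v
  have hfst : ∫ r in 0..τ, Φ (fermi τ r) (if r < x then v else -v) =
      (∫ r in 0..x, Φ (fermi τ r) v) - ∫ r in x..τ, Φ (fermi τ r) v := by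
    rw [sub_eq_add_neg, ← intervalIntegral.integral_neg]
    refine Eq.trans ?_ (integral_ite_lt hx hinteg hinteg.neg)
    simp only [apply_ite (Φ _), map_neg]
  have hsnd : v - (2 : ℝ) • Φ (fermi τ x) v =
      (Φ (fermi τ 0) v - Φ (fermi τ x) v) - (Φ (fermi τ x) v - Φ (fermi τ τ) v) := by
    nth_rw 1 [← hΦ.fermi_zero_apply_add_fermi_self_apply hτ v]
    rw [two_smul]
    abel
  rw [hfst, hsnd, ← Prod.mk_sub_mk]
  exact A.graph.sub_mem (hΦ.integral_fermi_mem_graph hA hτ le_rfl hx.1 hx.2 v)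
    (hΦ.integral_fermi_mem_graph hA hτ hx.1 hx.2 le_rfl v)

theorem particularSolution_mem_graph (hΦ : IsFunctionalCalculus A Φ) (hA : IsSelfAdjoint A)
    (hτ : 0 < τ) {F : ℝ →ᵇ H} {K k : NNReal} (hk : 0 < k) (hF : HolderWith K k F) {x : ℝ}
    (hx : x ∈ Ioo 0 τ) : (particularSolution Φ τ F x, particularImage Φ τ F x) ∈ A.graph := by
  have hsign : IntervalIntegrable (fun r => Φ (fermi τ r) (if r < x then F x else -F x))
      volume 0 τ := by
    refine hΦ.intervalIntegrable_fermi_apply hτ (C := ‖F x‖)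
      (stronglyMeasurable_ite_lt continuous_const continuous_const x) fun r => ?_
    split_ifs
    · rfl
    · exact (norm_neg _).le
  have hsplit : particularSolution Φ τ F x =
      (∫ r in 0..τ, Φ (fermi τ r) (antiperiodicIncrement τ F x r)) +
        ∫ r in 0..τ, Φ (fermi τ r) (if r < x then F x else -F x) := by
    rw [← intervalIntegral.integral_add
      (hΦ.intervalIntegrable_fermi_antiperiodicIncrement hτ F x) hsign]
    simp only [particularSolution, antiperiodicShift_eq_add, map_add]
  rw [hsplit, particularImage, ← Prod.mk_add_mk]
  exact A.graph.add_mem (hΦ.integral_fermi_antiperiodicIncrement_mem_graph hA hτ hk hF hx)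
    (hΦ.integral_fermi_ite_neg_mem_graph hA hτ (Ioo_subset_Icc_self hx) (F x))

end IsFunctionalCalculus

/-- The function `α` for which `ψ = particularSolution Φ τ F` satisfies
`e^{-A²} ψ(x) = e^{-xA - A²/2} α(x)`. -/
def gaussianCoefficient (Φ : (ℝ → ℝ) → H →L[ℂ] H) (τ : ℝ) (F : ℝ → H) (x : ℝ) : H :=
  (∫ s in 0..x, Φ (gaussianExp (-s)) (Φ (fermi τ 0) (F s))) -
    ∫ s in x..τ, Φ (gaussianExp (-s)) (Φ (fermi τ τ) (F s))

namespace IsFunctionalCalculus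

theorem continuous_gaussianExp_neg_apply (hΦ : IsFunctionalCalculus A Φ) {g : ℝ → H}
    (hg : Continuous g) : Continuous fun s => Φ (gaussianExp (-s)) (g s) := by
  have hcont : Continuous fun t => Φ (gaussianExp t) :=
    continuous_iff_continuousAt.2 fun t => (hΦ.hasDerivAt_gaussianExp t).continuousAt
  exact (hcont.comp continuous_neg).clm_apply hg

theorem gaussianExp_sq_mul_fermi (hΦ : IsFunctionalCalculus A Φ) (hτ : 0 < τ) {x c r : ℝ}
    (hc : c ∈ Icc 0 τ) (hr : r ∈ Icc 0 τ) :
    Φ (gaussianExp 0) * Φ (gaussianExp 0) * Φ (fermi τ r) =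
      Φ (gaussianExp x) * Φ (gaussianExp (-(x + c - r))) * Φ (fermi τ c) := by
  rw [mul_assoc, hΦ.gaussianExp_mul_fermi hτ hr hc (show 0 + r = (r - c) + c by ring), ← mul_assoc,
    hΦ.gaussianExp_mul_gaussianExp (show 0 + (r - c) = x + -(x + c - r) by ring)]

theorem gaussianExp_sq_integral_fermi (hΦ : IsFunctionalCalculus A Φ) (hτ : 0 < τ) (F : ℝ →ᵇ H)
    {a b c : ℝ} (ha : a ∈ Icc 0 τ) (hb : b ∈ Icc 0 τ) (hc : c ∈ Icc 0 τ) (x : ℝ) :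
    (Φ (gaussianExp 0) * Φ (gaussianExp 0)) (∫ r in a..b, Φ (fermi τ r) (F (x + c - r))) =
      Φ (gaussianExp x)
        (∫ s in (x + c - b)..(x + c - a), Φ (gaussianExp (-s)) (Φ (fermi τ c) (F s))) := by
  have hsub : uIcc a b ⊆ Icc 0 τ := ordConnected_Icc.uIcc_subset ha hb
  have hinteg : IntervalIntegrable (fun r => Φ (fermi τ r) (F (x + c - r))) volume a b :=
    (hΦ.intervalIntegrable_fermi_comp_sub_left hτ F _).mono_set (hsub.trans Icc_subset_uIcc)
  have hcont : Continuous fun s => Φ (gaussianExp (-s)) (Φ (fermi τ c) (F s)) :=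
    hΦ.continuous_gaussianExp_neg_apply (by fun_prop)
  rw [← ContinuousLinearMap.intervalIntegral_comp_comm _ hinteg,
    ← ContinuousLinearMap.intervalIntegral_comp_comm _ (hcont.intervalIntegrable _ _),
    ← intervalIntegral.integral_comp_sub_left]
  exact intervalIntegral.integral_congr fun r hr =>
    DFunLike.congr_fun (hΦ.gaussianExp_sq_mul_fermi hτ hc (hsub hr)) (F (x + c - r))

theorem gaussianExp_sq_particularSolution (hΦ : IsFunctionalCalculus A Φ) (hτ : 0 < τ)
    (F : ℝ →ᵇ H) {x : ℝ} (hx : x ∈ Icc 0 τ) :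
    (Φ (gaussianExp 0) * Φ (gaussianExp 0)) (particularSolution Φ τ F x) =
      Φ (gaussianExp x) (gaussianCoefficient Φ τ F x) := by
  have h0 : (0 : ℝ) ∈ Icc 0 τ := ⟨le_rfl, hτ.le⟩
  have hτ' : τ ∈ Icc 0 τ := ⟨hτ.le, le_rfl⟩
  rw [hΦ.particularSolution_eq hτ F hx, gaussianCoefficient, map_sub, map_sub,
    hΦ.gaussianExp_sq_integral_fermi hτ F h0 hx h0 x,
    hΦ.gaussianExp_sq_integral_fermi hτ F hx hτ' hτ' x]
  simp only [add_zero, sub_self, sub_zero, add_sub_cancel_left, add_sub_cancel_right]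

theorem hasDerivAt_gaussianCoefficient (hΦ : IsFunctionalCalculus A Φ) (hτ : 0 < τ) {F : ℝ → H}
    (hF : Continuous F) (x : ℝ) :
    HasDerivAt (gaussianCoefficient Φ τ F) (Φ (gaussianExp (-x)) (F x)) x := by
  have hprimitive : ∀ r, HasDerivAt
      (fun x => ∫ s in r..x, Φ (gaussianExp (-s)) (Φ (fermi τ r) (F s)))
      (Φ (gaussianExp (-x)) (Φ (fermi τ r) (F x))) x := fun r =>
    ((hΦ.continuous_gaussianExp_neg_apply (by fun_prop)).integral_hasStrictDerivAt r x).hasDerivAt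
  have hsum := (hprimitive 0).add (hprimitive τ)
  rw [← map_add, hΦ.fermi_zero_apply_add_fermi_self_apply hτ] at hsum
  refine hsum.congr_of_eventuallyEq (.of_forall fun y => ?_)
  rw [gaussianCoefficient, intervalIntegral.integral_symm τ y, sub_neg_eq_add]
  rfl

theorem intertwines_gaussianExp (hΦ : IsFunctionalCalculus A Φ) (hA : IsSelfAdjoint A) (t : ℝ) :
    Intertwines (Φ (gaussianExp t)) A A :=
  hΦ.intertwines hA (continuousAtEnds_gaussianExp t) (continuousAtEnds_mul_gaussianExp t)

theorem hasDerivAt_particularSolution (hΦ : IsFunctionalCalculus A Φ) (hA : IsSelfAdjoint A)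
    (hτ : 0 < τ) {F : ℝ →ᵇ H} {K k : NNReal} (hk : 0 < k) (hF : HolderWith K k F) {x : ℝ}
    (hx : x ∈ Ioo 0 τ) :
    HasDerivAt (particularSolution Φ τ F) (F x - particularImage Φ τ F x) x := by
  set G : ℝ → H →L[ℂ] H := fun t => Φ (gaussianExp t)
  have hinj : Function.Injective (G 0 * G 0) :=
    (hΦ.injective_gaussianExp 0).comp (hΦ.injective_gaussianExp 0)
  refine hasDerivAt_of_injective_comp (K := (G 0 * G 0).restrictScalars ℝ)
    (v := fun x => F x - particularImage Φ τ F x) hinj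
    (F.continuous.continuousOn.sub (hΦ.continuousOn_particularImage hτ hk hF)) (fun x hx => ?_) hx
  have hprod : HasDerivAt (fun x => G x (gaussianCoefficient Φ τ F x))
      ((-Φ fun y => y * gaussianExp x y) (gaussianCoefficient Φ τ F x) + G x (G (-x) (F x))) x :=
    hasDerivAt_complexCLM_apply (hΦ.hasDerivAt_gaussianExp x)
      (hΦ.hasDerivAt_gaussianCoefficient hτ F.continuous x)
  have himage : (Φ fun y => y * gaussianExp x y) (gaussianCoefficient Φ τ F x) =
      (G 0 * G 0) (particularImage Φ τ F x) := by
    have hmem := hΦ.mem_graph (continuousAtEnds_gaussianExp x) (continuousAtEnds_mul_gaussianExp x)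
      (gaussianCoefficient Φ τ F x)
    rw [← hΦ.gaussianExp_sq_particularSolution hτ F (Ioo_subset_Icc_self hx)] at hmem
    exact snd_eq_of_mem_graph hmem (hΦ.intertwines_gaussianExp hA 0 _ _
      (hΦ.intertwines_gaussianExp hA 0 _ _ (hΦ.particularSolution_mem_graph hA hτ hk hF hx)))
  have hsq : G x (G (-x) (F x)) = (G 0 * G 0) (F x) :=
    DFunLike.congr_fun (hΦ.gaussianExp_mul_gaussianExp (show x + -x = 0 + 0 by ring)) (F x)
  have heq : (fun y => (G 0 * G 0) (particularSolution Φ τ F y)) =ᶠ[𝓝 x]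
      fun y => G y (gaussianCoefficient Φ τ F y) := by
    filter_upwards [isOpen_Ioo.mem_nhds hx] with y hy
    exact hΦ.gaussianExp_sq_particularSolution hτ F (Ioo_subset_Icc_self hy)
  rw [neg_apply, himage, hsq, neg_add_eq_sub, ← map_sub] at hprod
  exact hprod.congr_of_eventuallyEq heq

end IsFunctionalCalculus

end ParticularSolution

section BoundaryProjection

variable {E : Type*} [NormedAddCommGroup E] [InnerProductSpace ℂ E] {J : E →L[ℂ] E}

theorem Pplus_eq_zero_iff {v : E} : Pplus J v = 0 ↔ J v = -v := by
  simp [Pplus, -smul_add, eq_neg_iff_add_eq_zero, add_comm]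

theorem Pminus_eq_zero_iff {v : E} : Pminus J v = 0 ↔ J v = v := by
  simp [Pminus, sub_eq_zero, eq_comm (a := v)]

theorem Pplus_add_Pminus_eq (u v : E) :
    Pplus J u + Pminus J v = (2⁻¹ : ℂ) • (u + v + J (u - v)) := by
  simp only [Pplus, Pminus, smul_apply, add_apply, sub_apply, ContinuousLinearMap.id_apply,
    ← smul_add, map_sub]
  congr 1
  abel

end BoundaryProjection

section SignatureOperator

theorem eq_and_eq_of_add_eq_add {E F : Type*} [AddCommGroup E] [IsAddTorsionFree E] [FunLike F E E]
    [AddMonoidHomClass F E E] {J : F} {a a' b b' : E}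
    (ha : J a = a) (ha' : J a' = a') (hb : J b = -b) (hb' : J b' = -b')
    (h : a + b = a' + b') : a = a' ∧ b = b' := by
  have hsub : a - a' = b' - b := by rw [sub_eq_sub_iff_add_eq_add, h, add_comm]
  have hneg : a - a' = -(a - a') := by
    conv_lhs => rw [← ha, ← ha', ← map_sub, hsub, map_sub, hb, hb', ← neg_sub', ← hsub]
  have heq : a = a' := sub_eq_zero.1 (self_eq_neg.1 hneg)
  exact ⟨heq, add_left_cancel (heq ▸ h)⟩

variable {J : H →L[ℂ] H}

theorem IsSignatureOperator.apply_apply (hJ : IsSignatureOperator J) (v : H) : J (J v) = v :=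
  DFunLike.congr_fun hJ.2 v

theorem IsSignatureOperator.apply_Pplus (hJ : IsSignatureOperator J) (v : H) :
    J (Pplus J v) = Pplus J v := by
  simp [Pplus, hJ.apply_apply, add_comm]

theorem IsSignatureOperator.apply_Pminus (hJ : IsSignatureOperator J) (v : H) :
    J (Pminus J v) = -Pminus J v := by
  simp [Pminus, hJ.apply_apply, ← smul_neg]

theorem IsSignatureOperator.eq_and_eq_of_Pplus_add_Pminus (hJ : IsSignatureOperator J)
    {u v φp φm : H} (hφp : J φp = φp) (hφm : J φm = -φm)
    (h : Pplus J u + Pminus J v = φp + φm) : Pplus J u = φp ∧ Pminus J v = φm :=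
  have : IsAddTorsionFree H := .of_isTorsionFree ℂ H
  eq_and_eq_of_add_eq_add (hJ.apply_Pplus u) hφp (hJ.apply_Pminus v) hφm h

theorem mem_graph_pmapComp_iff (hJ : IsSignatureOperator J) {L : H →ₗ.[ℂ] H} {a b : H} :
    (a, b) ∈ (pmapComp J L).graph ↔ (a, J b) ∈ L.graph := by
  have heq : ∀ c, J c = b ↔ c = J b := fun c =>
    ⟨fun h => by rw [← h, hJ.apply_apply], fun h => by rw [h, hJ.apply_apply]⟩
  simp only [LinearPMap.mem_graph_iff]
  exact exists_congr fun c => and_congr_right fun _ => heq (L c)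

end SignatureOperator

section PositivePMap

variable {E : Type*} [NormedAddCommGroup E] [InnerProductSpace ℂ E] {L : E →ₗ.[ℂ] E}

theorem IsPositivePMap.re_inner_pos_of_mem_graph (hL : IsPositivePMap L) {x y : E}
    (hxy : (x, y) ∈ L.graph) (hx : x ≠ 0) : 0 < (⟪y, x⟫_ℂ).re := by
  obtain ⟨h, rfl, rfl⟩ := L.mem_graph_iff.1 hxy
  exact (Complex.pos_iff.1 (hL h hx)).1

theorem IsPositivePMap.re_inner_nonneg_of_mem_graph (hL : IsPositivePMap L) {x y : E}
    (hxy : (x, y) ∈ L.graph) : 0 ≤ (⟪y, x⟫_ℂ).re := by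
  rcases eq_or_ne x 0 with rfl | hx
  · simp
  · exact (hL.re_inner_pos_of_mem_graph hxy hx).le

end PositivePMap

section StrongSolution

variable {E : Type*} [NormedAddCommGroup E] [InnerProductSpace ℂ E]
  {A B : E →ₗ.[ℂ] E} {f g ψ φ : ℝ → E} {s : Set ℝ}

theorem isStrongSolutionOn_iff : IsStrongSolutionOn B f ψ s ↔ ∃ ψ' : ℝ → E, ContinuousOn ψ' s ∧
    ∀ x ∈ s, HasDerivAt ψ (ψ' x) x ∧ (ψ x, f x - ψ' x) ∈ B.graph := by
  have hgraph : ∀ u v w, (u, v - w) ∈ B.graph ↔ ∃ hu : u ∈ B.domain, w = -B ⟨u, hu⟩ + v := by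
    intro u v w
    simp [LinearPMap.mem_graph_iff, neg_add_eq_sub, eq_sub_iff_add_eq', add_comm w]
  simp only [IsStrongSolutionOn, hgraph]

namespace IsStrongSolutionOn

theorem add (hψ : IsStrongSolutionOn B f ψ s) (hφ : IsStrongSolutionOn B g φ s) :
    IsStrongSolutionOn B (f + g) (ψ + φ) s := by
  obtain ⟨ψ', hψ'c, hψ'⟩ := isStrongSolutionOn_iff.1 hψ
  obtain ⟨φ', hφ'c, hφ'⟩ := isStrongSolutionOn_iff.1 hφ
  refine isStrongSolutionOn_iff.2 ⟨ψ' + φ', hψ'c.add hφ'c, fun x hx =>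
    ⟨(hψ' x hx).1.add (hφ' x hx).1, ?_⟩⟩
  simpa [add_sub_add_comm] using B.graph.add_mem (hψ' x hx).2 (hφ' x hx).2

theorem map (hψ : IsStrongSolutionOn A f ψ s) {M : E →L[ℂ] E} (hM : Intertwines M A B) :
    IsStrongSolutionOn B (M ∘ f) (M ∘ ψ) s := by
  obtain ⟨ψ', hψ'c, hψ'⟩ := isStrongSolutionOn_iff.1 hψ
  refine isStrongSolutionOn_iff.2 ⟨M ∘ ψ', M.continuous.comp_continuousOn hψ'c, fun x hx =>
    ⟨(M.restrictScalars ℝ).hasFDerivAt.comp_hasDerivAt x (hψ' x hx).1, ?_⟩⟩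
  simpa using hM _ _ (hψ' x hx).2

theorem sub (hψ : IsStrongSolutionOn B f ψ s) (hφ : IsStrongSolutionOn B g φ s) :
    IsStrongSolutionOn B (f - g) (ψ - φ) s := by
  have hneg : Intertwines (-1 : E →L[ℂ] E) B B := fun _ _ h => by simpa using B.graph.neg_mem h
  rw [sub_eq_add_neg f, sub_eq_add_neg ψ]
  exact hψ.add (hφ.map hneg)

theorem congr_right (hψ : IsStrongSolutionOn B f ψ s) (hfg : EqOn f g s) :
    IsStrongSolutionOn B g ψ s := by
  obtain ⟨ψ', hψ'c, hψ'⟩ := isStrongSolutionOn_iff.1 hψ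
  exact isStrongSolutionOn_iff.2 ⟨ψ', hψ'c, fun x hx => hfg hx ▸ hψ' x hx⟩

end IsStrongSolutionOn

end StrongSolution

section Uniqueness

variable {J : H →L[ℂ] H} {L : H →ₗ.[ℂ] H} {ψ : ℝ → H} {τ : ℝ}

theorem hasDerivAt_re_inner_apply_self {T : H →L[ℂ] H} (hT : IsSelfAdjoint T) {ψ' : H} {x : ℝ}
    (hψ : HasDerivAt ψ ψ' x) :
    HasDerivAt (fun x => (⟪T (ψ x), ψ x⟫_ℂ).re) (2 * (⟪T ψ', ψ x⟫_ℂ).re) x := by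
  have hTψ : HasDerivAt (fun x => T (ψ x)) (T ψ') x :=
    (T.restrictScalars ℝ).hasFDerivAt.comp_hasDerivAt x hψ
  refine (Complex.reCLM.hasFDerivAt.comp_hasDerivAt x (hTψ.inner ℂ hψ)).congr_deriv ?_
  have hsymm : (⟪T (ψ x), ψ'⟫_ℂ).re = (⟪T ψ', ψ x⟫_ℂ).re :=
    (congrArg Complex.re (hT.isSymmetric (ψ x) ψ')).trans (inner_re_symm (𝕜 := ℂ) _ _)
  rw [Complex.reCLM_apply, Complex.add_re, hsymm, two_mul]

namespace IsStrongSolutionOn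

theorem exists_hasDerivAt_re_inner (hJ : IsSignatureOperator J) {s : Set ℝ}
    (hψ : IsStrongSolutionOn (pmapComp J L) 0 ψ s) {x : ℝ} (hx : x ∈ s) :
    ∃ l, (ψ x, l) ∈ L.graph ∧
      HasDerivAt (fun x => (⟪J (ψ x), ψ x⟫_ℂ).re) (-(2 * (⟪l, ψ x⟫_ℂ).re)) x := by
  obtain ⟨ψ', -, hψ'⟩ := isStrongSolutionOn_iff.1 hψ
  obtain ⟨hderiv, hmem⟩ := hψ' x hx
  rw [mem_graph_pmapComp_iff hJ, Pi.zero_apply, zero_sub, map_neg] at hmem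
  refine ⟨_, hmem, (hasDerivAt_re_inner_apply_self hJ.1 hderiv).congr_deriv ?_⟩
  simp

theorem antitoneOn_re_inner (hJ : IsSignatureOperator J) (hL : IsPositivePMap L)
    (hψ : IsStrongSolutionOn (pmapComp J L) 0 ψ (Ioo 0 τ)) (hψc : ContinuousOn ψ (Icc 0 τ)) :
    AntitoneOn (fun x => (⟪J (ψ x), ψ x⟫_ℂ).re) (Icc 0 τ) := by
  refine antitoneOn_of_hasDerivWithinAt_nonpos (convex_Icc 0 τ)
    (f' := deriv fun x => (⟪J (ψ x), ψ x⟫_ℂ).re) (Complex.continuous_re.comp_continuousOn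
      ((J.continuous.comp_continuousOn hψc).inner hψc)) ?_ ?_ <;>
    rw [interior_Icc] <;> intro x hx <;>
    obtain ⟨l, hl, hderiv⟩ := hψ.exists_hasDerivAt_re_inner hJ hx
  · exact hderiv.differentiableAt.hasDerivAt.hasDerivWithinAt
  · rw [hderiv.deriv]
    linarith [hL.re_inner_nonneg_of_mem_graph hl]

theorem re_inner_eq_zero (hJ : IsSignatureOperator J) (hL : IsPositivePMap L)
    (hψ : IsStrongSolutionOn (pmapComp J L) 0 ψ (Ioo 0 τ)) (hψc : ContinuousOn ψ (Icc 0 τ))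
    (h0 : Pplus J (ψ 0) = 0) (hτ : Pminus J (ψ τ) = 0) {x : ℝ} (hx : x ∈ Icc 0 τ) :
    (⟪J (ψ x), ψ x⟫_ℂ).re = 0 := by
  have hanti := hψ.antitoneOn_re_inner hJ hL hψc
  have hinner : ∀ v : H, 0 ≤ (⟪v, v⟫_ℂ).re := fun v => inner_self_nonneg (𝕜 := ℂ)
  apply le_antisymm
  · refine (hanti ⟨le_rfl, hx.1.trans hx.2⟩ hx hx.1).trans ?_
    simpa [Pplus_eq_zero_iff.1 h0] using hinner (ψ 0)
  · refine le_trans ?_ (hanti hx ⟨hx.1.trans hx.2, le_rfl⟩ hx.2)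
    simpa only [Pminus_eq_zero_iff.1 hτ] using hinner (ψ τ)

theorem eqOn_zero (hJ : IsSignatureOperator J) (hL : IsPositivePMap L) (hτ : 0 < τ)
    (hψ : IsStrongSolutionOn (pmapComp J L) 0 ψ (Ioo 0 τ)) (hψc : ContinuousOn ψ (Icc 0 τ))
    (hψ0 : Pplus J (ψ 0) = 0) (hψτ : Pminus J (ψ τ) = 0) : EqOn ψ 0 (Icc 0 τ) := by
  have hIoo : EqOn ψ 0 (Ioo 0 τ) := by
    intro x hx
    obtain ⟨l, hl, hderiv⟩ := hψ.exists_hasDerivAt_re_inner hJ hx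
    have hconst : (fun _ => (0 : ℝ)) =ᶠ[𝓝 x] fun x => (⟪J (ψ x), ψ x⟫_ℂ).re := by
      filter_upwards [isOpen_Ioo.mem_nhds hx] with y hy
      exact (hψ.re_inner_eq_zero hJ hL hψc hψ0 hψτ (Ioo_subset_Icc_self hy)).symm
    have hzero := (hderiv.congr_of_eventuallyEq hconst).unique (hasDerivAt_const x 0)
    by_contra hne
    linarith [hL.re_inner_pos_of_mem_graph hl hne]
  exact hIoo.of_subset_closure hψc continuousOn_const Ioo_subset_Icc_self (closure_Ioo hτ.ne).ge

end IsStrongSolutionOn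

end Uniqueness

theorem SimilarToSelfAdjoint.exists_intertwines {B : H →ₗ.[ℂ] H} (hB : SimilarToSelfAdjoint B) :
    ∃ (S : H ≃L[ℂ] H) (A : H →ₗ.[ℂ] H), IsSelfAdjoint A ∧ Intertwines (S.symm : H →L[ℂ] H) A B := by
  obtain ⟨S, A, hA, hdom, hAS⟩ := hB
  refine ⟨S, A, hA, fun a b hab => ?_⟩
  obtain ⟨⟨y, hy⟩, rfl, rfl⟩ := A.mem_graph_iff.1 hab
  obtain ⟨h, hh, rfl⟩ : y ∈ (fun h => S h) '' (B.domain : Set H) := hdom ▸ hy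
  simpa [hAS ⟨h, hh⟩ hy] using B.mem_graph ⟨h, hh⟩

section GramOperator

variable {J M : H →L[ℂ] H} {A L : H →ₗ.[ℂ] H}

/-- The Gram operator of the pull-back along `M` of the indefinite form `⟪J ·, ·⟫`. -/
def gramOperator (J M : H →L[ℂ] H) : H →L[ℂ] H :=
  ContinuousLinearMap.adjoint M * (J * M)

theorem inner_gramOperator_left (x y : H) : ⟪gramOperator J M x, y⟫_ℂ = ⟪J (M x), M y⟫_ℂ := by
  simp [gramOperator, ContinuousLinearMap.adjoint_inner_left]

theorem inner_gramOperator_right (x y : H) : ⟪x, gramOperator J M y⟫_ℂ = ⟪M x, J (M y)⟫_ℂ := by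
  simp [gramOperator, ContinuousLinearMap.adjoint_inner_right]

theorem intertwines_gramOperator (hJ : IsSignatureOperator J) (hA : IsSelfAdjoint A)
    (hL : IsSelfAdjoint L) (hM : Intertwines M A (pmapComp J L)) :
    Intertwines (gramOperator J M) A A := by
  refine fun a b hab => (mem_graph_iff_forall_inner hA).2 fun c d hcd => ?_
  have hcomm := inner_comm_of_mem_graph hL ((mem_graph_pmapComp_iff hJ).1 (hM _ _ hcd))
    ((mem_graph_pmapComp_iff hJ).1 (hM _ _ hab))
  rw [inner_gramOperator_right, inner_gramOperator_right, ← hcomm]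
  exact (hJ.1.isSymmetric (M d) (M a)).symm

theorem re_inner_gramOperator_nonneg (hJ : IsSignatureOperator J) (hL : IsPositivePMap L)
    (hM : Intertwines M A (pmapComp J L)) {a b : H} (hab : (a, b) ∈ A.graph) :
    0 ≤ (⟪gramOperator J M b, a⟫_ℂ).re := by
  rw [inner_gramOperator_left]
  exact hL.re_inner_nonneg_of_mem_graph ((mem_graph_pmapComp_iff hJ).1 (hM _ _ hab))

theorem eq_zero_of_intertwines_pmapComp (hJ : IsSignatureOperator J) (hL : IsPositivePMap L)
    (hM : Intertwines M A (pmapComp J L)) (hinj : Function.Injective M) {a : H}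
    (ha : (a, 0) ∈ A.graph) : a = 0 := by
  have hMa : (M a, 0) ∈ L.graph := by
    simpa using (mem_graph_pmapComp_iff hJ).1 (hM _ _ ha)
  by_contra hne
  simpa using hL.re_inner_pos_of_mem_graph hMa ((map_ne_zero_iff M hinj).2 hne)

end GramOperator

section Positivity

theorem ContinuousAtEnds.sqrt {g : ℝ → ℝ} (hg : ContinuousAtEnds g) :
    ContinuousAtEnds fun x => √(g x) :=
  let ⟨_, hBot⟩ := hg.tendsto_atBot; let ⟨_, hTop⟩ := hg.tendsto_atTop
  ⟨hg.continuous.sqrt, ⟨_, hBot.sqrt⟩, ⟨_, hTop.sqrt⟩⟩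

variable {A : H →ₗ.[ℂ] H} {Φ : (ℝ → ℝ) → H →L[ℂ] H} {G : H →L[ℂ] H}

namespace IsFunctionalCalculus

theorem injective_mul_id_mul (hΦ : IsFunctionalCalculus A Φ) (hker : ∀ a, (a, 0) ∈ A.graph → a = 0)
    {g : ℝ → ℝ} (hg : ContinuousAtEnds g) (hxg : ContinuousAtEnds fun x => x * g x)
    (hne : ∀ x, g x ≠ 0) : Function.Injective (Φ fun x => g x * (x * g x)) := by
  have hginj := hΦ.injective hg hne
  rw [hΦ.map_mul hg hxg]
  refine hginj.comp ((injective_iff_map_eq_zero _).2 fun y hy => ?_)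
  have hmem := hΦ.mem_graph hg hxg y
  rw [show (Φ fun x => x * g x) y = 0 from hy] at hmem
  exact (map_eq_zero_iff _ hginj).1 (hker _ hmem)

theorem re_inner_apply_mul_id_mul_nonneg (hΦ : IsFunctionalCalculus A Φ) (hG : Intertwines G A A)
    (hpos : ∀ a b, (a, b) ∈ A.graph → 0 ≤ (⟪G b, a⟫_ℂ).re) {g : ℝ → ℝ} (hg : ContinuousAtEnds g)
    (hxg : ContinuousAtEnds fun x => x * g x) (v : H) :
    0 ≤ (⟪G (Φ (fun x => g x * (x * g x)) v), v⟫_ℂ).re := by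
  have hcomm : G (Φ g (Φ (fun x => x * g x) v)) = Φ g (G (Φ (fun x => x * g x) v)) :=
    DFunLike.congr_fun (hΦ.commute hG g).eq _
  have hsymm := (hΦ.isSelfAdjoint g).isSymmetric (G (Φ (fun x => x * g x) v)) v
  rw [hΦ.map_mul hg hxg, mul_apply_eq_comp, hcomm]
  exact (hpos _ _ (hΦ.mem_graph hg hxg v)).trans_eq (congrArg Complex.re hsymm.symm)

theorem re_inner_apply_nonneg (hΦ : IsFunctionalCalculus A Φ) (hG : Intertwines G A A)
    (hpos : ∀ a b, (a, b) ∈ A.graph → 0 ≤ (⟪G b, a⟫_ℂ).re)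
    (hker : ∀ a, (a, 0) ∈ A.graph → a = 0) {t : ℝ → ℝ} (ht : ContinuousAtEnds t)
    (htx : ∀ x, 0 ≤ x * t x) (v : H) : 0 ≤ (⟪G (Φ t v), v⟫_ℂ).re := by
  have hg := continuousAtEnds_gaussianExp 0
  have hxg := continuousAtEnds_mul_gaussianExp 0
  have he := hg.mul hxg
  set e : ℝ → ℝ := fun x => gaussianExp 0 x * (x * gaussianExp 0 x)
  have hte_nonneg : ∀ x, 0 ≤ t x * e x := fun x => by
    rw [show t x * e x = (x * t x) * gaussianExp 0 x ^ 2 by ring]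
    exact mul_nonneg (htx x) (sq_nonneg _)
  have hs := (ht.mul he).sqrt
  set s : ℝ → ℝ := fun x => √(t x * e x)
  have hsq : Φ t * Φ e = Φ s * Φ s := by
    rw [← hΦ.map_mul ht he, ← hΦ.map_mul hs hs]
    exact congrArg Φ (funext fun x => (Real.mul_self_sqrt (hte_nonneg x)).symm)
  have heinj : Function.Injective (Φ e) :=
    hΦ.injective_mul_id_mul hker hg hxg fun x => (gaussianExp_pos 0 x).ne'
  have hts : ∀ y, Φ t (Φ e y) = Φ s (Φ s y) := DFunLike.congr_fun hsq
  have hse : ∀ y, Φ s (Φ e y) = Φ e (Φ s y) := DFunLike.congr_fun (hΦ.commute_map hs he).eq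
  have hGs : ∀ y, G (Φ s y) = Φ s (G y) := DFunLike.congr_fun (hΦ.commute hG s).eq
  have hGe : ∀ y, G (Φ e y) = Φ e (G y) := DFunLike.congr_fun (hΦ.commute hG e).eq
  -- The multiplier `t e = s²` is split evenly between the two arguments of the form.
  have hform (y : H) : ⟪G (Φ t (Φ e y)), Φ e y⟫_ℂ = ⟪G (Φ e (Φ s y)), Φ s y⟫_ℂ := calc
    ⟪G (Φ t (Φ e y)), Φ e y⟫_ℂ = ⟪Φ s (G (Φ s y)), Φ e y⟫_ℂ := by rw [hts, hGs]
    _ = ⟪G (Φ s y), Φ s (Φ e y)⟫_ℂ := (hΦ.isSelfAdjoint s).isSymmetric _ _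
    _ = ⟪G (Φ s y), Φ e (Φ s y)⟫_ℂ := by rw [hse]
    _ = ⟪Φ e (G (Φ s y)), Φ s y⟫_ℂ := ((hΦ.isSelfAdjoint e).isSymmetric _ _).symm
    _ = ⟪G (Φ e (Φ s y)), Φ s y⟫_ℂ := by rw [hGe]
  refine (denseRange_of_isSelfAdjoint_of_injective (hΦ.isSelfAdjoint e) heinj).induction_on v
    (isClosed_le continuous_const (by fun_prop)) fun y => ?_
  rw [hform]
  exact hΦ.re_inner_apply_mul_id_mul_nonneg hG hpos hg hxg (Φ s y)

end IsFunctionalCalculus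

theorem mul_fermi_sub_nonneg {τ : ℝ} (hτ : 0 ≤ τ) (x : ℝ) :
    0 ≤ x * (fermi τ 0 x - fermi τ τ x) := by
  simp only [fermi, expWeight, zero_mul, neg_zero, Real.exp_zero, ← sub_mul, ← mul_assoc]
  refine mul_nonneg ?_ (inv_pos.2 (one_add_exp_pos _)).le
  rcases le_total 0 x with hx | hx
  · exact mul_nonneg hx (sub_nonneg.2 (Real.exp_le_one_iff.2 (by nlinarith)))
  · exact mul_nonneg_of_nonpos_of_nonpos hx (sub_nonpos.2 (Real.one_le_exp (by nlinarith)))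

end Positivity

section Solutions

variable {A : H →ₗ.[ℂ] H} {Φ : (ℝ → ℝ) → H →L[ℂ] H} {τ : ℝ}

open scoped BoundedContinuousFunction NNReal

namespace IsFunctionalCalculus

theorem isStrongSolutionOn_fermi (hΦ : IsFunctionalCalculus A Φ) (v : H) :
    IsStrongSolutionOn A 0 (fun t => Φ (fermi τ t) v) (Ioo 0 τ) := by
  refine isStrongSolutionOn_iff.2 ⟨fun t => -Φ (fun x => x * fermi τ t x) v,
    (hΦ.continuousOn_mul_fermi.clm_apply continuousOn_const).neg, fun t ht => ⟨?_, ?_⟩⟩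
  · simpa using hasDerivAt_complexCLM_apply (hΦ.hasDerivAt_fermi ht) (hasDerivAt_const t v)
  · simpa using hΦ.mem_graph (continuousAtEnds_fermi (ht.1.trans ht.2) (Ioo_subset_Icc_self ht))
      (continuousAtEnds_mul_fermi ht) v

theorem isStrongSolutionOn_particularSolution (hΦ : IsFunctionalCalculus A Φ)
    (hA : IsSelfAdjoint A) (hτ : 0 < τ) {F : ℝ →ᵇ H} {K k : ℝ≥0} (hk : 0 < k)
    (hF : HolderWith K k F) : IsStrongSolutionOn A F (particularSolution Φ τ F) (Ioo 0 τ) := by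
  refine isStrongSolutionOn_iff.2 ⟨fun x => F x - particularImage Φ τ F x,
    F.continuous.continuousOn.sub (hΦ.continuousOn_particularImage hτ hk hF), fun x hx =>
    ⟨hΦ.hasDerivAt_particularSolution hA hτ hk hF hx, ?_⟩⟩
  simpa using hΦ.particularSolution_mem_graph hA hτ hk hF hx

end IsFunctionalCalculus

end Solutions

section BoundaryValues

theorem isUnit_one_add_of_re_inner_nonneg {𝕜 E : Type*} [RCLike 𝕜] [NormedAddCommGroup E]
    [InnerProductSpace 𝕜 E] [CompleteSpace E] {T : E →L[𝕜] E}
    (hT : ∀ v, 0 ≤ RCLike.re ⟪T v, v⟫_𝕜) : IsUnit (1 + T) :=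
  ContinuousLinearMap.isUnit_of_forall_le_norm_inner_map _ (c := 1) one_pos fun v => calc
    ‖v‖ ^ 2 * ((1 : NNReal) : ℝ) ≤ RCLike.re ⟪v, v⟫_𝕜 + RCLike.re ⟪T v, v⟫_𝕜 := by
      simpa only [NNReal.coe_one, mul_one, inner_self_eq_norm_sq, le_add_iff_nonneg_right]
        using hT v
    _ = RCLike.re ⟪(1 + T) v, v⟫_𝕜 := by
      rw [add_apply, one_apply_eq_self, inner_add_left, map_add]
    _ ≤ ‖⟪(1 + T) v, v⟫_𝕜‖ := RCLike.re_le_norm _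

variable {J : H →L[ℂ] H} {A L : H →ₗ.[ℂ] H} {S : H ≃L[ℂ] H} {Φ : (ℝ → ℝ) → H →L[ℂ] H} {τ : ℝ}

theorem re_inner_apply_conj_nonneg (hJ : IsSignatureOperator J) (hA : IsSelfAdjoint A)
    (hL : IsSelfAdjoint L) (hLpos : IsPositivePMap L)
    (hS : Intertwines (S.symm : H →L[ℂ] H) A (pmapComp J L)) (hΦ : IsFunctionalCalculus A Φ)
    {t : ℝ → ℝ} (ht : ContinuousAtEnds t) (htx : ∀ x, 0 ≤ x * t x) (v : H) :
    0 ≤ (⟪J (S.symm (Φ t (S v))), v⟫_ℂ).re := by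
  simpa [inner_gramOperator_left] using
    hΦ.re_inner_apply_nonneg (intertwines_gramOperator hJ hA hL hS)
      (fun _ _ => re_inner_gramOperator_nonneg hJ hLpos hS)
      (fun _ => eq_zero_of_intertwines_pmapComp hJ hLpos hS S.symm.injective) ht htx (S v)

theorem exists_Pplus_add_Pminus_fermi_eq (hJ : IsSignatureOperator J) (hA : IsSelfAdjoint A)
    (hL : IsSelfAdjoint L) (hLpos : IsPositivePMap L)
    (hS : Intertwines (S.symm : H →L[ℂ] H) A (pmapComp J L)) (hΦ : IsFunctionalCalculus A Φ)
    (hτ : 0 < τ) (y : H) :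
    ∃ w, Pplus J (S.symm (Φ (fermi τ 0) w)) + Pminus J (S.symm (Φ (fermi τ τ) w)) = y := by
  have h0 := continuousAtEnds_fermi hτ (left_mem_Icc.2 hτ.le)
  have h1 := continuousAtEnds_fermi hτ (right_mem_Icc.2 hτ.le)
  set T : H →L[ℂ] H := Φ fun x => fermi τ 0 x - fermi τ τ x
  have hunit : IsUnit (1 + J * (S.symm * T * S : H →L[ℂ] H)) :=
    isUnit_one_add_of_re_inner_nonneg fun v =>
      re_inner_apply_conj_nonneg hJ hA hL hLpos hS hΦ (h0.sub h1) (mul_fermi_sub_nonneg hτ.le) v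
  obtain ⟨v, hv⟩ := (ContinuousLinearMap.isUnit_iff_bijective.1 hunit).2 ((2 : ℂ) • y)
  have hsum : S.symm (Φ (fermi τ 0) (S v)) + S.symm (Φ (fermi τ τ) (S v)) = v := by
    rw [← map_add, hΦ.fermi_zero_apply_add_fermi_self_apply hτ, S.symm_apply_apply]
  have hsub : S.symm (Φ (fermi τ 0) (S v)) - S.symm (Φ (fermi τ τ) (S v)) = S.symm (T (S v)) := by
    rw [← map_sub, ← sub_apply, ← hΦ.map_sub h0 h1]
  refine ⟨S v, ?_⟩
  rw [Pplus_add_Pminus_eq, hsum, hsub, inv_smul_eq_iff₀ two_ne_zero]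
  exact hv

end BoundaryValues

section Existence

open scoped BoundedContinuousFunction NNReal

theorem holderOnWith_of_dist_le {X Y : Type*} [PseudoMetricSpace X] [PseudoMetricSpace Y]
    {K k : ℝ≥0} {f : X → Y} {s : Set X}
    (hf : ∀ x ∈ s, ∀ y ∈ s, dist (f x) (f y) ≤ K * dist x y ^ (k : ℝ)) :
    HolderOnWith K k f s := fun x hx y hy => by
  have h := ENNReal.ofReal_le_ofReal (hf x hx y hy)
  rwa [ENNReal.ofReal_mul K.coe_nonneg, ← ENNReal.ofReal_rpow_of_nonneg dist_nonneg k.coe_nonneg,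
    ENNReal.ofReal_coe_nnreal, ← edist_dist, ← edist_dist] at h

theorem exists_boundedContinuousFunction_holderWith_eqOn {E : Type*} [PseudoMetricSpace E]
    {f : ℝ → E} {K k : ℝ≥0} {a b : ℝ} (hab : a ≤ b) (hk : 0 < k)
    (hf : HolderOnWith K k f (Icc a b)) :
    ∃ F : ℝ →ᵇ E, HolderWith K k F ∧ EqOn F f (Icc a b) := by
  have hext : HolderWith K k ((Icc a b).domRestrict f ∘ projIcc a b hab) := by
    simpa using (HolderWith.restrict_iff.2 hf).comp (holderWith_one.2 (.projIcc hab))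
  refine ⟨(BoundedContinuousFunction.mkOfCompact ⟨(Icc a b).domRestrict f,
      (hf.continuousOn hk).domRestrict⟩).compContinuous ⟨projIcc a b hab, continuous_projIcc⟩,
    hext, fun x hx => ?_⟩
  simp [projIcc_of_mem hab hx]

theorem exists_isStrongSolutionOn {J : H →L[ℂ] H} {A L : H →ₗ.[ℂ] H} {S : H ≃L[ℂ] H}
    (hJ : IsSignatureOperator J) (hA : IsSelfAdjoint A) (hL : IsSelfAdjoint L)
    (hLpos : IsPositivePMap L) (hS : Intertwines (S.symm : H →L[ℂ] H) A (pmapComp J L))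
    {τ : ℝ} (hτ : 0 < τ) {f : ℝ → H} {K k : ℝ≥0} (hk : 0 < k)
    (hf : HolderOnWith K k f (Icc 0 τ)) {φp φm : H} (hφp : J φp = φp) (hφm : J φm = -φm) :
    ∃ ψ : ℝ → H, ContinuousOn ψ (Icc 0 τ) ∧ IsStrongSolutionOn (pmapComp J L) f ψ (Ioo 0 τ) ∧
      Pplus J (ψ 0) = φp ∧ Pminus J (ψ τ) = φm := by
  obtain ⟨Φ, hΦ⟩ := exists_isFunctionalCalculus hA
  obtain ⟨F, hF, hFf⟩ := exists_boundedContinuousFunction_holderWith_eqOn hτ.le (by simpa using hk)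
    ((holderWith_one.2 (S : H →L[ℂ] H).lipschitz).comp_holderOnWith hf)
  rw [one_mul] at hF
  set p := particularSolution Φ τ F
  obtain ⟨w, hw⟩ := exists_Pplus_add_Pminus_fermi_eq hJ hA hL hLpos hS hΦ hτ
    (φp + φm - (Pplus J (S.symm (p 0)) + Pminus J (S.symm (p τ))))
  have hsol := ((hΦ.isStrongSolutionOn_fermi w).add
    (hΦ.isStrongSolutionOn_particularSolution hA hτ hk hF)).map hS
  refine ⟨S.symm ∘ ((fun t => Φ (fermi τ t) w) + p), ?_, hsol.congr_right fun x hx => ?_, ?_⟩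
  · exact S.symm.continuous.comp_continuousOn ((hΦ.continuousOn_fermi_apply hτ w).add
      (hΦ.continuous_particularSolution hτ F).continuousOn)
  · simp [hFf (Ioo_subset_Icc_self hx)]
  · refine hJ.eq_and_eq_of_Pplus_add_Pminus hφp hφm ?_
    simp only [Function.comp_apply, Pi.add_apply, map_add]
    rw [add_add_add_comm, hw, sub_add_cancel]

end Existence

/-- Nonhomogeneous problem on `(0, τ)`: if `f` is Hölder continuous on
`[0, τ]`, then the boundary value problem `dψ/dx = -Bψ + f`, `P₊ψ(0) = φ₊`, `P₋ψ(τ) = φ₋`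
has a unique strong solution. -/
theorem statement5 (J : H →L[ℂ] H) (hJ : IsSignatureOperator J)
    (L : H →ₗ.[ℂ] H) (hdense : Dense (L.domain : Set H))
    (hLsa : IsSelfAdjoint L) (hLpos : IsPositivePMap L)
    (hsim : SimilarToSelfAdjoint (pmapComp J L))
    (τ : ℝ) (hτ : 0 < τ)
    (f : ℝ → H)
    (hf : ∃ K > (0 : ℝ), ∃ k ∈ Set.Ioc (0 : ℝ) 1,
      ∀ x ∈ Set.Icc (0 : ℝ) τ, ∀ y ∈ Set.Icc (0 : ℝ) τ, ‖f x - f y‖ ≤ K * |x - y| ^ k)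
    (φp φm : H) (hφp : J φp = φp) (hφm : J φm = -φm) :
    (∃ ψ : ℝ → H,
        ContinuousOn ψ (Set.Icc 0 τ) ∧
        IsStrongSolutionOn (pmapComp J L) f ψ (Set.Ioo 0 τ) ∧
        Pplus J (ψ 0) = φp ∧ Pminus J (ψ τ) = φm) ∧
    (∀ ψ₁ ψ₂ : ℝ → H,
        (ContinuousOn ψ₁ (Set.Icc 0 τ) ∧
          IsStrongSolutionOn (pmapComp J L) f ψ₁ (Set.Ioo 0 τ) ∧
          Pplus J (ψ₁ 0) = φp ∧ Pminus J (ψ₁ τ) = φm) →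
        (ContinuousOn ψ₂ (Set.Icc 0 τ) ∧
          IsStrongSolutionOn (pmapComp J L) f ψ₂ (Set.Ioo 0 τ) ∧
          Pplus J (ψ₂ 0) = φp ∧ Pminus J (ψ₂ τ) = φm) →
        Set.EqOn ψ₁ ψ₂ (Set.Icc 0 τ)) := by
  refine ⟨?_, ?_⟩
  · obtain ⟨S, A, hA, hS⟩ := hsim.exists_intertwines
    obtain ⟨K, hK, k, hk, hf⟩ := hf
    lift K to NNReal using hK.le
    lift k to NNReal using hk.1.le
    exact exists_isStrongSolutionOn hJ hA hLsa hLpos hS hτ hk.1 (holderOnWith_of_dist_le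
      fun x hx y hy => by simpa only [dist_eq_norm, Real.norm_eq_abs] using hf x hx y hy) hφp hφm
  · rintro ψ₁ ψ₂ ⟨hc₁, hψ₁, h0₁, hτ₁⟩ ⟨hc₂, hψ₂, h0₂, hτ₂⟩ x hx
    have hzero : EqOn (ψ₁ - ψ₂) 0 (Icc 0 τ) := IsStrongSolutionOn.eqOn_zero hJ hLpos hτ
      (sub_self f ▸ hψ₁.sub hψ₂) (hc₁.sub hc₂) (by simp [h0₁, h0₂]) (by simp [hτ₁, hτ₂])
    exact sub_eq_zero.1 (hzero hx)

end
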